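/- arXiv:2208.13957 — 9 statements merged into one kernel-verified Lean document; each statement's English description precedes it below -/
import Mathlib

section
/- Let m2, m3 be positive integers, a ∈ ℝ, and x ∈ (−1, 1). Then a^2 (2m3+1) F(−m2, −m3−1; 1/2; x^2) + (2m2+1) F(−m2−1, −m3; 1/2; x^2) + 2 a x (2m2+1)(2m3+1) F(−m2, −m3; 3/2; x^2) > a^2 + 1 + 2 a x. -/
/-!
Write `G(z) = F(-m, -n; 1/2; z)` and `c = m + n`. Comparing coefficients, the three hypergeometric
polynomials of the theorem are expressed through `G` and `G'` (`eval_P`, `eval_R`):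

* `P = (2n+1) F(-m, -n-1; 1/2; z) = (1 + 2n + 2mz) G + 2z(1-z) G'`,
* `Q = (2m+1) F(-m-1, -n; 1/2; z) = (1 + 2m + 2nz) G + 2z(1-z) G'`,
* `R = (2m+1)(2n+1) F(-m, -n; 3/2; z) = (1 + 2c) G + 2(1-z) G'`.

The claim says that the quadratic form `(P-1) a² + 2x(R-1) a + (Q-1)`, with `z = x²`, is positive;
as `P > 1`, this amounts to `(P-1)(Q-1) > z (R-1)²`. Put `U = mn G² - c z G G' - z(1-z) G'²` and
`S = 4(1-z) U + c (G² - 1)`. Then identically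
`(P-1)(Q-1) - z (R-1)² = (1-z) (S + (c+1)(G-1)²)`,
so it is enough that `S > 0` on `[0, 1)`. The hypergeometric equation for `G` gives
`S' = -4(1+c) U`, hence `(1-z) S' + (1+c) S = c(1+c)(G² - 1) ≥ 0`. Therefore
`S / (1-z)^(1+c)` is nondecreasing on `[0, 1)`, and `S(0) = 4mn > 0` (`S_pos`).
-/

/-- The Gauss hypergeometric polynomial `F(-m, -n; 1/2; z)`. -/
noncomputable def F12 (m n : ℕ) (z : ℝ) : ℝ :=
  (m.factorial : ℝ) * (n.factorial : ℝ) *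
    ∑ j ∈ Finset.range (min m n + 1),
      (4 : ℝ) ^ j * z ^ j /
        (((m - j).factorial : ℝ) * ((n - j).factorial : ℝ) * ((2 * j).factorial : ℝ))

/-- The Gauss hypergeometric polynomial `F(-m, -n; 3/2; z)`. -/
noncomputable def F32 (m n : ℕ) (z : ℝ) : ℝ :=
  (m.factorial : ℝ) * (n.factorial : ℝ) *
    ∑ j ∈ Finset.range (min m n + 1),
      (4 : ℝ) ^ j * z ^ j /
        (((m - j).factorial : ℝ) * ((n - j).factorial : ℝ) * ((2 * j + 1).factorial : ℝ))

open Polynomial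

namespace GaussIneq

/-- The coefficient `4^j (j!)² / (2j)!`, the part of the coefficient of `z^j` in
`F(-m, -n; 1/2; z)` that does not depend on `m` and `n`. -/
noncomputable def w (j : ℕ) : ℝ := 4 ^ j * (j.factorial : ℝ) ^ 2 / ((2 * j).factorial : ℝ)

lemma w_succ (j : ℕ) : w (j + 1) * (2 * j + 1) = w j * (2 * (j + 1)) := by
  unfold w
  have h : 2 * (j + 1) = (2 * j + 1) + 1 := by ring
  rw [h, Nat.factorial_succ (2 * j + 1), Nat.factorial_succ (2 * j), Nat.factorial_succ j]
  have := Nat.factorial_ne_zero (2 * j)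
  push_cast
  field_simp
  ring

/-- The coefficient of `z^j` in `F(-m, -n; 1/2; z)`; the binomials make it vanish for
`j > min m n`. -/
noncomputable def g (m n j : ℕ) : ℝ := (m.choose j : ℝ) * (n.choose j : ℝ) * w j

lemma g_nonneg (m n j : ℕ) : 0 ≤ g m n j := by unfold g w; positivity

lemma g_zero (m n : ℕ) : g m n 0 = 1 := by simp [g, w]

lemma g_comm (m n j : ℕ) : g m n j = g n m j := by unfold g; ring

lemma choose_rec (m j : ℕ) :
    ((j : ℝ) + 1) * (m.choose (j + 1) : ℝ) = (m.choose j : ℝ) * ((m : ℝ) - j) := by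
  rcases le_or_gt j m with h | h
  · have := Nat.choose_succ_right_eq m j
    have h2 : ((m.choose (j + 1) * (j + 1) : ℕ) : ℝ) = ((m.choose j * (m - j) : ℕ) : ℝ) := by
      rw [this]
    push_cast [Nat.cast_sub h] at h2
    linarith
  · simp [Nat.choose_eq_zero_of_lt h, Nat.choose_eq_zero_of_lt (Nat.lt_succ_of_lt h)]

lemma g_rec (m n j : ℕ) :
    g m n (j + 1) * ((2 * j + 1) * (j + 1)) = 2 * ((m : ℝ) - j) * ((n : ℝ) - j) * g m n j := by
  have h1 := choose_rec m j
  have h2 := choose_rec n j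
  have h3 := w_succ j
  have hj : (j : ℝ) + 1 ≠ 0 := by positivity
  unfold g
  apply mul_left_cancel₀ hj
  calc _ = (((j : ℝ) + 1) * (m.choose (j + 1) : ℝ)) * (((j : ℝ) + 1) * (n.choose (j + 1) : ℝ))
        * (w (j + 1) * (2 * j + 1)) := by ring
    _ = _ := by rw [h1, h2, h3]; ring

lemma g_succ_right (m n j : ℕ) :
    (2 * (n : ℝ) + 1) * g m (n + 1) (j + 1) =
      (1 + 2 * n + 2 * (j + 1)) * g m n (j + 1) + 2 * (m - j) * g m n j := by
  have h1 := choose_rec m j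
  have h2 := choose_rec n j
  have h3 := w_succ j
  unfold g
  rw [Nat.choose_succ_succ n j]
  push_cast
  linear_combination (2 * (n.choose j : ℝ) * w j) * h1
    + (-2 * (m.choose (j + 1) : ℝ) * w (j + 1)) * h2
    + ((m.choose (j + 1) : ℝ) * (n.choose j : ℝ)) * h3

/-- `F(-m, -n; 1/2; z)` as a polynomial in `z`. -/
noncomputable def G (m n : ℕ) : ℝ[X] :=
  ∑ j ∈ Finset.range (min m n + 1), monomial j (g m n j)

lemma g_eq_zero {m n j : ℕ} (h : min m n < j) : g m n j = 0 := by
  unfold g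
  rcases min_lt_iff.1 h with h | h <;> simp [Nat.choose_eq_zero_of_lt h]

lemma G_coeff (m n j : ℕ) : (G m n).coeff j = g m n j := by
  unfold G
  simp only [finsetSum_coeff, coeff_monomial, Finset.sum_ite_eq', Finset.mem_range]
  split_ifs with h
  · rfl
  · rw [g_eq_zero (by omega)]

lemma G_comm (m n : ℕ) : G m n = G n m := by
  ext j; rw [G_coeff, G_coeff, g_comm]

lemma term_eq {m n j : ℕ} (h : j ≤ min m n) :
    g m n j = (m.factorial : ℝ) * n.factorial * (4 ^ j /
      (((m - j).factorial : ℝ) * ((n - j).factorial : ℝ) * ((2 * j).factorial : ℝ))) := by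
  obtain ⟨hm, hn⟩ := le_min_iff.1 h
  rw [g, w, Nat.cast_choose ℝ hm, Nat.cast_choose ℝ hn]
  have := Nat.factorial_ne_zero j
  have := Nat.factorial_ne_zero (m - j)
  have := Nat.factorial_ne_zero (n - j)
  have := Nat.factorial_ne_zero (2 * j)
  field_simp

lemma F12_eq (m n : ℕ) (z : ℝ) : F12 m n z = (G m n).eval z := by
  unfold F12 G
  rw [eval_finsetSum, Finset.mul_sum]
  refine Finset.sum_congr rfl fun j hj => ?_
  rw [eval_monomial, term_eq (Nat.lt_succ_iff.1 (Finset.mem_range.1 hj))]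
  ring

/-- `F(-m, -n; 3/2; z)` as a polynomial in `z`. -/
noncomputable def H (m n : ℕ) : ℝ[X] :=
  ∑ j ∈ Finset.range (min m n + 1), monomial j (g m n j / (2 * j + 1))

lemma H_coeff (m n j : ℕ) : (H m n).coeff j = g m n j / (2 * j + 1) := by
  unfold H
  simp only [finsetSum_coeff, coeff_monomial, Finset.sum_ite_eq', Finset.mem_range]
  split_ifs with h
  · rfl
  · rw [g_eq_zero (by omega), zero_div]

lemma F32_eq (m n : ℕ) (z : ℝ) : F32 m n z = (H m n).eval z := by
  unfold F32 H
  rw [eval_finsetSum, Finset.mul_sum]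
  refine Finset.sum_congr rfl fun j hj => ?_
  rw [eval_monomial, term_eq (Nat.lt_succ_iff.1 (Finset.mem_range.1 hj)), Nat.factorial_succ]
  have := Nat.factorial_ne_zero (m - j)
  have := Nat.factorial_ne_zero (n - j)
  have := Nat.factorial_ne_zero (2 * j)
  push_cast
  field_simp

lemma coeff_X_mul_derivative (p : ℝ[X]) (j : ℕ) :
    (X * derivative p).coeff j = j * p.coeff j := by
  cases j with
  | zero => simp
  | succ j => rw [coeff_X_mul, coeff_derivative]; push_cast; ring

/-- The first contiguity relation, `P = (1 + 2n + 2mz) G + 2z(1-z) G'`. -/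
lemma eval_P (m n : ℕ) (z : ℝ) :
    (2 * (n : ℝ) + 1) * (G m (n + 1)).eval z =
      (1 + 2 * n + 2 * m * z) * (G m n).eval z +
        2 * z * (1 - z) * (derivative (G m n)).eval z := by
  have h : C (2 * (n : ℝ) + 1) * G m (n + 1) =
      C (1 + 2 * (n : ℝ)) * G m n + C (2 * (m : ℝ)) * (X * G m n) +
        (C 2 * (X * derivative (G m n)) - C 2 * (X * (X * derivative (G m n)))) := by
    ext j
    cases j with
    | zero => simp [G_coeff, g_zero]; ring
    | succ j =>
      simp only [coeff_add, coeff_sub, coeff_C_mul, coeff_X_mul, coeff_X_mul_derivative, G_coeff]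
      rw [g_succ_right, ← G_coeff, coeff_derivative, G_coeff]
      ring
  have := congrArg (eval z) h
  simp only [eval_add, eval_sub, eval_mul, eval_C, eval_X] at this
  linear_combination this

/-- The second contiguity relation, `R = (1 + 2(m+n)) G + 2(1-z) G'`. -/
lemma eval_R (m n : ℕ) (z : ℝ) :
    (2 * (m : ℝ) + 1) * (2 * n + 1) * (H m n).eval z =
      (1 + 2 * (m + n)) * (G m n).eval z + 2 * (1 - z) * (derivative (G m n)).eval z := by
  have h : C ((2 * (m : ℝ) + 1) * (2 * n + 1)) * H m n =
      C (1 + 2 * ((m : ℝ) + n)) * G m n + C 2 * derivative (G m n)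
        - C 2 * (X * derivative (G m n)) := by
    ext j
    simp only [coeff_add, coeff_sub, coeff_C_mul, coeff_X_mul_derivative, coeff_derivative,
      G_coeff, H_coeff]
    have hj : (2 * (j : ℝ) + 1) ≠ 0 := by positivity
    field_simp
    linear_combination -2 * g_rec m n j
  have := congrArg (eval z) h
  simp only [eval_add, eval_sub, eval_mul, eval_C, eval_X] at this
  linear_combination this

/-- The hypergeometric differential equation for `G`. -/
lemma ode (m n : ℕ) (z : ℝ) :
    z * (1 - z) * (derivative (derivative (G m n))).eval z =
      m * n * (G m n).eval z
        - (1 / 2 - (1 - (m + n)) * z) * (derivative (G m n)).eval z := by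
  have h : C 2 * derivative (X * derivative (G m n)) - derivative (G m n)
      - C 2 * (X * derivative (X * derivative (G m n)))
      + C (2 * ((m : ℝ) + n)) * (X * derivative (G m n)) - C (2 * (m : ℝ) * n) * G m n = 0 := by
    ext j
    simp only [coeff_add, coeff_sub, coeff_C_mul, coeff_X_mul_derivative, coeff_derivative,
      G_coeff, coeff_zero]
    push_cast
    linear_combination g_rec m n j
  have := congrArg (eval z) h
  simp only [eval_add, eval_sub, eval_mul, eval_C, eval_X, derivative_mul, derivative_X,
    eval_one, eval_zero] at this
  linear_combination this / 2

lemma eval_nonneg {p : ℝ[X]} (hp : ∀ j, 0 ≤ p.coeff j) {z : ℝ} (hz : 0 ≤ z) : 0 ≤ p.eval z := by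
  rw [eval_eq_sum_range]
  exact Finset.sum_nonneg fun j _ => mul_nonneg (hp j) (pow_nonneg hz j)

lemma G_ge_one (m n : ℕ) {z : ℝ} (hz : 0 ≤ z) : 1 ≤ (G m n).eval z := by
  have : 0 ≤ (G m n - 1).eval z := by
    refine eval_nonneg (fun j => ?_) hz
    cases j with
    | zero => simp [G_coeff, g_zero]
    | succ j => simp [G_coeff, coeff_one, g_nonneg]
  simpa using this

lemma G'_nonneg (m n : ℕ) {z : ℝ} (hz : 0 ≤ z) : 0 ≤ (derivative (G m n)).eval z := by
  refine eval_nonneg (fun j => ?_) hz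
  rw [coeff_derivative, G_coeff]
  exact mul_nonneg (g_nonneg _ _ _) (by positivity)

/-- `U = mn G² - (m+n) z G G' - z(1-z) G'²`. -/
noncomputable def U (m n : ℕ) (z : ℝ) : ℝ :=
  m * n * (G m n).eval z ^ 2 - (m + n) * z * (G m n).eval z * (derivative (G m n)).eval z
    - z * (1 - z) * (derivative (G m n)).eval z ^ 2

/-- `S = 4(1-z) U + (m+n)(G² - 1)`. -/
noncomputable def S (m n : ℕ) (z : ℝ) : ℝ :=
  4 * (1 - z) * U m n z + (m + n) * ((G m n).eval z ^ 2 - 1)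

lemma hasDerivAt_S (m n : ℕ) (z : ℝ) :
    HasDerivAt (S m n) (-4 * (1 + (m + n)) * U m n z) z := by
  have hG := (G m n).hasDerivAt z
  have hG' := (derivative (G m n)).hasDerivAt z
  have hid := hasDerivAt_id' z
  have h1 := hid.const_sub 1
  have hU := (((hG.pow 2).const_mul ((m : ℝ) * n)).sub
    (((hid.const_mul ((m : ℝ) + n)).mul hG).mul hG')).sub ((hid.mul h1).mul (hG'.pow 2))
  have hS := ((h1.const_mul 4).mul hU).add (((hG.pow 2).sub_const 1).const_mul ((m : ℝ) + n))
  refine hS.congr_deriv ?_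
  have ho := ode m n z
  simp only [Pi.mul_apply, Pi.sub_apply, Pi.pow_apply, U]
  push_cast
  generalize eval z (G m n) = g0 at *
  generalize eval z (derivative (G m n)) = g1 at *
  generalize eval z (derivative (derivative (G m n))) = g2 at *
  linear_combination (-4 * ((m : ℝ) + n) * g0 - 8 * (1 - z) * g1) * ho

lemma S_pos {m n : ℕ} (hm : 0 < m) (hn : 0 < n) {z : ℝ} (hz0 : 0 ≤ z) (hz1 : z < 1) :
    0 < S m n z := by
  have hm' : (0 : ℝ) < m := by exact_mod_cast hm
  have hn' : (0 : ℝ) < n := by exact_mod_cast hn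
  have hderiv : ∀ t : ℝ, t < 1 → HasDerivAt (fun t => S m n t / (1 - t) ^ (m + n + 1))
      (((m : ℝ) + n) * (1 + (m + n)) * ((G m n).eval t ^ 2 - 1) / (1 - t) ^ (m + n + 2)) t := by
    intro t ht
    have ht' : (1 - t) ≠ 0 := by linarith
    refine ((hasDerivAt_S m n t).div (((hasDerivAt_id' t).const_sub 1).pow (m + n + 1))
      (pow_ne_zero _ ht')).congr_deriv ?_
    simp only [S, Pi.pow_apply, Nat.add_sub_cancel]
    push_cast
    field_simp
    ring
  have hmono : MonotoneOn (fun t => S m n t / (1 - t) ^ (m + n + 1)) (Set.Ico 0 1) := by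
    refine monotoneOn_of_deriv_nonneg (convex_Ico 0 1)
      (fun t ht => (hderiv t ht.2).continuousAt.continuousWithinAt) (fun t ht => ?_)
      (fun t ht => ?_)
    · rw [interior_Ico] at ht
      exact (hderiv t ht.2).differentiableAt.differentiableWithinAt
    · rw [interior_Ico] at ht
      rw [(hderiv t ht.2).deriv]
      have h1 : 0 < 1 - t := by linarith [ht.2]
      have h2 : 0 ≤ (G m n).eval t ^ 2 - 1 := by nlinarith [G_ge_one m n ht.1.le]
      positivity
  have h := hmono (Set.left_mem_Ico.2 one_pos) ⟨hz0, hz1⟩ hz0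
  have h0 : S m n 0 = 4 * (m * n) := by
    have : (G m n).eval 0 = 1 := by rw [← coeff_zero_eq_eval_zero, G_coeff, g_zero]
    simp [S, U, this]
  simp only [h0, sub_zero, one_pow, div_one] at h
  have hpos : 0 < S m n z / (1 - z) ^ (m + n + 1) := lt_of_lt_of_le (by positivity) h
  exact (div_pos_iff_of_pos_right (pow_pos (by linarith) _)).1 hpos

end GaussIneq

open GaussIneq

/-- Inequality (1.6)/(2.10): for positive integers `m₂, m₃`, any `a ∈ ℝ` and
`x ∈ (−1, 1)`,
`a² (2m₃+1) F(−m₂, −m₃−1; 1/2; x²) + (2m₂+1) F(−m₂−1, −m₃; 1/2; x²)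
  + 2ax (2m₂+1)(2m₃+1) F(−m₂, −m₃; 3/2; x²) > a² + 1 + 2ax`. -/
theorem stmt_5 (m2 m3 : ℕ) (hm2 : 0 < m2) (hm3 : 0 < m3) (a x : ℝ)
    (hx1 : -1 < x) (hx2 : x < 1) :
    a ^ 2 * (2 * (m3 : ℝ) + 1) * F12 m2 (m3 + 1) (x ^ 2) +
      (2 * (m2 : ℝ) + 1) * F12 (m2 + 1) m3 (x ^ 2) +
      2 * a * x * (2 * (m2 : ℝ) + 1) * (2 * (m3 : ℝ) + 1) * F32 m2 m3 (x ^ 2) >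
    a ^ 2 + 1 + 2 * a * x := by
  have hz0 : 0 ≤ x ^ 2 := sq_nonneg x
  have hz1 : x ^ 2 < 1 := by nlinarith
  have hS := S_pos hm2 hm3 hz0 hz1
  have hP := eval_P m2 m3 (x ^ 2)
  have hQ := eval_P m3 m2 (x ^ 2)
  have hR := eval_R m2 m3 (x ^ 2)
  have hG := G_ge_one m2 m3 hz0
  have hG' := G'_nonneg m2 m3 hz0
  rw [G_comm m3 (m2 + 1), G_comm m3 m2] at hQ
  rw [F12_eq, F12_eq, F32_eq]
  unfold S U at hS
  have hm : (0 : ℝ) < m2 := by exact_mod_cast hm2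
  have hn : (0 : ℝ) < m3 := by exact_mod_cast hm3
  generalize hP' : (2 * (m3 : ℝ) + 1) * (G m2 (m3 + 1)).eval (x ^ 2) = P at *
  generalize (2 * (m2 : ℝ) + 1) * (G (m2 + 1) m3).eval (x ^ 2) = Q at *
  generalize hR' : (2 * (m2 : ℝ) + 1) * (2 * m3 + 1) * (H m2 m3).eval (x ^ 2) = R at *
  generalize (G m2 m3).eval (x ^ 2) = g0 at *
  generalize (derivative (G m2 m3)).eval (x ^ 2) = g1 at *
  have hP1 : 0 < P - 1 := by
    have h1 : 0 ≤ 2 * x ^ 2 * (1 - x ^ 2) * g1 := by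
      have : 0 ≤ 1 - x ^ 2 := by linarith
      positivity
    have h2 : 0 ≤ 2 * (m2 : ℝ) * x ^ 2 * g0 := by positivity
    have h3 : 0 < 2 * (m3 : ℝ) * g0 := by positivity
    rw [hP]
    linarith
  have hdet : 0 < (P - 1) * (Q - 1) - x ^ 2 * (R - 1) ^ 2 := by
    have key : (P - 1) * (Q - 1) - x ^ 2 * (R - 1) ^ 2 = (1 - x ^ 2) *
        ((4 * (1 - x ^ 2) * (m2 * m3 * g0 ^ 2 - (m2 + m3) * x ^ 2 * g0 * g1
          - x ^ 2 * (1 - x ^ 2) * g1 ^ 2) + (m2 + m3) * (g0 ^ 2 - 1))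
          + (m2 + m3 + 1) * (g0 - 1) ^ 2) := by
      rw [hP, hQ, hR]; ring
    rw [key]
    have : 0 < 1 - x ^ 2 := by linarith
    exact mul_pos this (add_pos_of_pos_of_nonneg hS (by positivity))
  -- completing the square in `a`
  have hfin : 0 < (P - 1) * (a ^ 2 * (P - 1) + 2 * a * x * (R - 1) + (Q - 1)) := by
    nlinarith [sq_nonneg (a * (P - 1) + x * (R - 1))]
  have := (mul_pos_iff_of_pos_left hP1).1 hfin
  rw [← hP', ← hR'] at this
  linear_combination this
end

section
/- Let m2, m3 be positive integers and 0 < z < 1. Then z · ( (2m2+1)(2m3+1) F(−m2, −m3; 3/2; z) − 1 )^2 < ( (2m2+1) F(−m2−1, −m3; 1/2; z) − 1 ) · ( (2m3+1) F(−m2, −m3−1; 1/2; z) − 1 ). -/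
open Polynomial

/-! ### Coefficients of the hypergeometric polynomials -/

/-- The `j`-th coefficient of `F(-m,-n;1/2;z)`; it vanishes automatically for `j > min m n`. -/
noncomputable def hypCoeff (m n j : ℕ) : ℝ :=
  (m.choose j : ℝ) * (n.choose j : ℝ) * (4 ^ j / (j.centralBinom : ℝ))

/-- `F(-m,-n;1/2;z)` as a polynomial. -/
noncomputable def hypPoly (m n : ℕ) : ℝ[X] :=
  ∑ j ∈ Finset.range (min m n + 1), C (hypCoeff m n j) * X ^ j

/-- `F(-m,-n;3/2;z)` as a polynomial. -/
noncomputable def hypPolyThreeHalves (m n : ℕ) : ℝ[X] :=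
  ∑ j ∈ Finset.range (min m n + 1), C (hypCoeff m n j / (2 * j + 1)) * X ^ j

theorem hypCoeff_nonneg (m n j : ℕ) : 0 ≤ hypCoeff m n j := by
  unfold hypCoeff; positivity

theorem hypCoeff_zero (m n : ℕ) : hypCoeff m n 0 = 1 := by
  simp [hypCoeff]

theorem hypCoeff_eq_zero {m n j : ℕ} (h : min m n < j) : hypCoeff m n j = 0 := by
  unfold hypCoeff
  rcases min_lt_iff.1 h with h | h <;> simp [Nat.choose_eq_zero_of_lt h]

theorem hypPoly_coeff (m n j : ℕ) : (hypPoly m n).coeff j = hypCoeff m n j := by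
  simp only [hypPoly, finsetSum_coeff, coeff_C_mul_X_pow]
  rw [Finset.sum_ite_eq]
  split_ifs with h
  · rfl
  · rw [hypCoeff_eq_zero]; simp at h; simp; omega

theorem hypPolyThreeHalves_coeff (m n j : ℕ) :
    (hypPolyThreeHalves m n).coeff j = hypCoeff m n j / (2 * j + 1) := by
  simp only [hypPolyThreeHalves, finsetSum_coeff, coeff_C_mul_X_pow]
  rw [Finset.sum_ite_eq]
  split_ifs with h
  · rfl
  · rw [hypCoeff_eq_zero, zero_div]; simp at h; simp; omega

theorem hypCoeff_eq_factorial {m n j : ℕ} (h : j ≤ min m n) :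
    hypCoeff m n j = (m.factorial : ℝ) * n.factorial * (4 ^ j /
      (((m - j).factorial : ℝ) * ((n - j).factorial : ℝ) * ((2 * j).factorial : ℝ))) := by
  have hm : j ≤ m := h.trans (min_le_left _ _)
  have hn : j ≤ n := h.trans (min_le_right _ _)
  have h2 : 2 * j - j = j := by omega
  unfold hypCoeff
  rw [Nat.centralBinom, Nat.cast_choose ℝ hm, Nat.cast_choose ℝ hn,
    Nat.cast_choose ℝ (by omega : j ≤ 2 * j), h2]
  have := fun k : ℕ => (Nat.cast_ne_zero (R := ℝ)).2 (Nat.factorial_ne_zero k)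
  have h1 := this j
  have h2 := this (m - j)
  have h3 := this (n - j)
  have h4 := this (2 * j)
  field_simp

theorem F12_eq_eval (m n : ℕ) (z : ℝ) : F12 m n z = (hypPoly m n).eval z := by
  rw [F12, hypPoly, eval_finsetSum, Finset.mul_sum]
  refine Finset.sum_congr rfl fun j hj => ?_
  rw [hypCoeff_eq_factorial (Nat.lt_succ_iff.1 (Finset.mem_range.1 hj))]
  simp only [eval_mul, eval_C, eval_pow, eval_X]
  ring

theorem F32_eq_eval (m n : ℕ) (z : ℝ) : F32 m n z = (hypPolyThreeHalves m n).eval z := by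
  rw [F32, hypPolyThreeHalves, eval_finsetSum, Finset.mul_sum]
  refine Finset.sum_congr rfl fun j hj => ?_
  rw [hypCoeff_eq_factorial (Nat.lt_succ_iff.1 (Finset.mem_range.1 hj)), Nat.factorial_succ]
  simp only [eval_mul, eval_C, eval_pow, eval_X]
  push_cast
  have := fun k : ℕ => (Nat.cast_ne_zero (R := ℝ)).2 (Nat.factorial_ne_zero k)
  have h2 := this (m - j)
  have h3 := this (n - j)
  have h4 := this (2 * j)
  have h5 : (2 * (j : ℝ) + 1) ≠ 0 := by positivity
  field_simp

theorem cast_choose_succ (m j : ℕ) :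
    (m.choose (j + 1) : ℝ) = (m - j) * m.choose j / (j + 1) := by
  rw [eq_div_iff (by positivity)]
  rcases le_or_gt j m with h | h
  · have := Nat.choose_succ_right_eq m j
    rw [← Nat.cast_sub h, mul_comm ((m - j : ℕ) : ℝ)]
    exact_mod_cast this
  · simp [Nat.choose_eq_zero_of_lt h, Nat.choose_eq_zero_of_lt (h.trans (Nat.lt_succ_self j))]

theorem four_pow_div_centralBinom_succ (j : ℕ) :
    (4 : ℝ) ^ (j + 1) / ((j + 1).centralBinom : ℝ) =
      4 ^ j / (j.centralBinom : ℝ) * (2 * (j + 1) / (2 * j + 1)) := by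
  have h : ((j : ℝ) + 1) * (j + 1).centralBinom = 2 * (2 * j + 1) * j.centralBinom := by
    exact_mod_cast Nat.succ_mul_centralBinom_succ j
  have h1 : (j.centralBinom : ℝ) ≠ 0 := by exact_mod_cast Nat.centralBinom_ne_zero j
  have h2 : ((j + 1).centralBinom : ℝ) ≠ 0 := by exact_mod_cast Nat.centralBinom_ne_zero (j + 1)
  have h3 : (2 * (j : ℝ) + 1) ≠ 0 := by positivity
  field_simp
  rw [pow_succ]
  linear_combination (-2 * (4 : ℝ) ^ j) * h

theorem hypCoeff_succ (m n j : ℕ) :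
    hypCoeff m n (j + 1) =
      2 * (m - j) * (n - j) / ((j + 1) * (2 * j + 1)) * hypCoeff m n j := by
  unfold hypCoeff
  rw [four_pow_div_centralBinom_succ, cast_choose_succ, cast_choose_succ]
  have h3 : (2 * (j : ℝ) + 1) ≠ 0 := by positivity
  have h4 : ((j : ℝ) + 1) ≠ 0 := by positivity
  generalize (4 : ℝ) ^ j / (j.centralBinom : ℝ) = w
  field_simp

theorem hypCoeff_succ_left (m n j : ℕ) :
    hypCoeff (m + 1) n (j + 1) =
      2 * (m + 1) * (n - j) / ((j + 1) * (2 * j + 1)) * hypCoeff m n j := by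
  unfold hypCoeff
  rw [four_pow_div_centralBinom_succ, Nat.choose_succ_succ]
  push_cast
  rw [cast_choose_succ, cast_choose_succ]
  have h3 : (2 * (j : ℝ) + 1) ≠ 0 := by positivity
  have h4 : ((j : ℝ) + 1) ≠ 0 := by positivity
  generalize (4 : ℝ) ^ j / (j.centralBinom : ℝ) = w
  field_simp
  ring

theorem hypPoly_comm (m n : ℕ) : hypPoly m n = hypPoly n m := by
  ext j
  simp only [hypPoly_coeff, hypCoeff]
  ring

/-! ### Differential and contiguous relations -/

/-- The hypergeometric differential equation, times `2`, arranged so that no coefficient is a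
difference. -/
theorem hypPoly_ode (m n : ℕ) :
    C 2 * (X * derivative (derivative (hypPoly m n))) + derivative (hypPoly m n)
      + C (2 * ((m : ℝ) + n)) * (X * derivative (hypPoly m n)) =
    C 2 * (X * (X * derivative (derivative (hypPoly m n))))
      + C 2 * (X * derivative (hypPoly m n)) + C (2 * (m * n : ℝ)) * hypPoly m n := by
  ext j
  rcases j with _ | _ | j
  · simp [coeff_derivative, hypPoly_coeff, hypCoeff_succ, hypCoeff_zero, mul_coeff_zero]
    ring
  · simp only [coeff_add, coeff_C_mul, coeff_X_mul, coeff_derivative, hypPoly_coeff, mul_coeff_zero,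
      coeff_X_zero, zero_mul]
    rw [hypCoeff_succ m n (0 + 1)]
    push_cast
    field_simp
    ring
  · simp only [coeff_add, coeff_C_mul, coeff_X_mul, coeff_derivative, hypPoly_coeff]
    rw [hypCoeff_succ m n (j + 1 + 1)]
    push_cast
    have h3 : (2 * ((j : ℝ) + 1 + 1) + 1) ≠ 0 := by positivity
    field_simp
    ring

theorem hypPoly_succ_left (m n : ℕ) :
    C (2 * (m : ℝ) + 1) * hypPoly (m + 1) n + C 2 * (X * (X * derivative (hypPoly m n))) =
      C (2 * (m : ℝ) + 1) * hypPoly m n + C (2 * (n : ℝ)) * (X * hypPoly m n)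
        + C 2 * (X * derivative (hypPoly m n)) := by
  ext j
  rcases j with _ | _ | j
  · simp [hypPoly_coeff, hypCoeff_zero, mul_coeff_zero]
  · simp only [coeff_add, coeff_C_mul, coeff_X_mul, coeff_derivative, hypPoly_coeff, mul_coeff_zero,
      coeff_X_zero, zero_mul]
    rw [hypCoeff_succ_left, hypCoeff_succ, hypCoeff_zero]
    push_cast
    field_simp
    ring
  · simp only [coeff_add, coeff_C_mul, coeff_X_mul, coeff_derivative, hypPoly_coeff]
    rw [hypCoeff_succ m n (j + 1), hypCoeff_succ_left]
    push_cast
    have h3 : (2 * ((j : ℝ) + 1) + 1) ≠ 0 := by positivity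
    field_simp
    ring

theorem hypPolyThreeHalves_eq (m n : ℕ) :
    C ((2 * (m : ℝ) + 1) * (2 * n + 1)) * hypPolyThreeHalves m n
        + C 2 * (X * derivative (hypPoly m n)) =
      C (1 + 2 * ((m : ℝ) + n)) * hypPoly m n + C 2 * derivative (hypPoly m n) := by
  ext j
  rcases j with _ | j
  · simp [coeff_derivative, hypPoly_coeff, hypPolyThreeHalves_coeff, hypCoeff_succ, hypCoeff_zero,
      mul_coeff_zero]
    ring
  · simp only [coeff_add, coeff_C_mul, coeff_X_mul, coeff_derivative, hypPoly_coeff,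
      hypPolyThreeHalves_coeff]
    rw [hypCoeff_succ m n (j + 1)]
    push_cast
    have h3 : (2 * ((j : ℝ) + 1) + 1) ≠ 0 := by positivity
    field_simp
    ring

theorem one_le_hypPoly_eval (m n : ℕ) {z : ℝ} (hz : 0 ≤ z) : 1 ≤ (hypPoly m n).eval z := by
  rw [eval_eq_sum_range]
  refine le_trans ?_ (Finset.single_le_sum (f := fun i => (hypPoly m n).coeff i * z ^ i)
    (fun i _ => ?_) (Finset.mem_range.2 (Nat.succ_pos _)))
  · simp [hypPoly_coeff, hypCoeff_zero]
  · have := hypCoeff_nonneg m n i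
    simp only [hypPoly_coeff]
    positivity

theorem derivative_hypPoly_eval_nonneg (m n : ℕ) {z : ℝ} (hz : 0 ≤ z) :
    0 ≤ (derivative (hypPoly m n)).eval z := by
  rw [eval_eq_sum_range]
  refine Finset.sum_nonneg fun i _ => ?_
  have := hypCoeff_nonneg m n (i + 1)
  simp only [coeff_derivative, hypPoly_coeff]
  positivity

/-! ### Positivity of `H` -/

/-- The function `H`; the difference of the two sides of the claimed inequality is `(1-z) H`. -/
noncomputable def gapFun (m n : ℕ) (z : ℝ) : ℝ :=
  ((hypPoly m n).eval z - 1) ^ 2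
    + 2 * ((m : ℝ) + n) * (hypPoly m n).eval z * ((hypPoly m n).eval z - 1)
    + 4 * (1 - z) * (m * n * (hypPoly m n).eval z ^ 2
      - (m + n) * z * (hypPoly m n).eval z * (derivative (hypPoly m n)).eval z
      - z * (1 - z) * (derivative (hypPoly m n)).eval z ^ 2)

/-- The first-order equation `(1-z) H' + (s+1) H = (s+1) (F-1) (2(1-z)D + (F-1) + 2sF)`. -/
theorem gapFun_hasDerivAt (m n : ℕ) (z : ℝ) :
    ∃ d : ℝ, HasDerivAt (gapFun m n) d z ∧
      (1 - z) * d + ((m : ℝ) + n + 1) * gapFun m n z =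
        ((m : ℝ) + n + 1) * ((hypPoly m n).eval z - 1) *
          (2 * (1 - z) * (derivative (hypPoly m n)).eval z + ((hypPoly m n).eval z - 1)
            + 2 * ((m : ℝ) + n) * (hypPoly m n).eval z) := by
  have hF := (hypPoly m n).hasDerivAt z
  have hD := (derivative (hypPoly m n)).hasDerivAt z
  have hid := hasDerivAt_id' z
  have h1 := hid.const_sub 1
  have ode := congrArg (eval z) (hypPoly_ode m n)
  simp only [eval_add, eval_mul, eval_C, eval_X] at ode
  have key := (((hF.sub_const 1).pow 2).add
    ((hF.const_mul (2 * ((m : ℝ) + n))).mul (hF.sub_const 1))).add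
    ((h1.const_mul 4).mul ((((hF.pow 2).const_mul ((m : ℝ) * n)).sub
      (((hid.const_mul ((m : ℝ) + n)).mul hF).mul hD)).sub ((hid.mul h1).mul (hD.pow 2))))
  refine ⟨_, key, ?_⟩
  simp only [gapFun, Pi.mul_apply, Pi.pow_apply, Pi.sub_apply]
  generalize eval z (hypPoly m n) = F at *
  generalize eval z (derivative (hypPoly m n)) = D at *
  generalize eval z (derivative (derivative (hypPoly m n))) = D2 at *
  push_cast
  linear_combination (-4 * (1 - z) ^ 2 * D - 2 * (1 - z) * (m + n) * F) * ode

theorem gapFun_pos {m n : ℕ} (hm : 0 < m) (hn : 0 < n) {z : ℝ} (hz0 : 0 < z) (hz1 : z < 1) :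
    0 < gapFun m n z := by
  have hm' : (0 : ℝ) < m := by exact_mod_cast hm
  have hn' : (0 : ℝ) < n := by exact_mod_cast hn
  have hder : ∀ x ∈ Set.Icc 0 z, ∃ e : ℝ, 0 ≤ e ∧
      HasDerivAt (fun x => gapFun m n x / (1 - x) ^ (m + n + 1)) e x := by
    intro x hx
    have hx1 : 0 < 1 - x := by linarith [hx.2]
    obtain ⟨d, hd, hde⟩ := gapFun_hasDerivAt m n x
    refine ⟨_, ?_, hd.div (((hasDerivAt_id' x).const_sub 1).pow (m + n + 1))
      (pow_pos hx1 _).ne'⟩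
    refine div_nonneg ?_ (by positivity)
    have hF := one_le_hypPoly_eval m n hx.1
    have hD := derivative_hypPoly_eval_nonneg m n hx.1
    have hnn : 0 ≤ (1 - x) * d + ((m : ℝ) + n + 1) * gapFun m n x := by
      rw [hde]
      have : 0 ≤ eval x (hypPoly m n) - 1 := by linarith
      have : 0 ≤ eval x (hypPoly m n) := by linarith
      positivity
    have := mul_nonneg (pow_pos hx1 (m + n)).le hnn
    refine this.trans_eq ?_
    simp only [Nat.add_sub_cancel]
    push_cast
    ring
  have hmono : MonotoneOn (fun x => gapFun m n x / (1 - x) ^ (m + n + 1)) (Set.Icc 0 z) := by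
    refine monotoneOn_of_deriv_nonneg (convex_Icc 0 z) (fun x hx => ?_) (fun x hx => ?_)
      (fun x hx => ?_)
    · obtain ⟨e, -, he⟩ := hder x hx
      exact he.continuousAt.continuousWithinAt
    · obtain ⟨e, -, he⟩ := hder x (interior_subset hx)
      exact he.differentiableAt.differentiableWithinAt
    · obtain ⟨e, he0, he⟩ := hder x (interior_subset hx)
      rwa [he.deriv]
  have h := hmono (Set.left_mem_Icc.2 hz0.le) (Set.right_mem_Icc.2 hz0.le) hz0.le
  have h0 : gapFun m n 0 = 4 * (m * n) := by
    have : (hypPoly m n).eval 0 = 1 := by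
      rw [← coeff_zero_eq_eval_zero, hypPoly_coeff, hypCoeff_zero]
    simp [gapFun, this]
  simp only [h0, sub_zero, one_pow, div_one] at h
  have hpos : 0 < gapFun m n z / (1 - z) ^ (m + n + 1) := lt_of_lt_of_le (by positivity) h
  have hz : 0 < (1 - z) ^ (m + n + 1) := pow_pos (by linarith) _
  exact (div_pos_iff_of_pos_right hz).1 hpos

/-- Inequality (2.11): for positive integers `m₂, m₃` and `0 < z < 1`,
`z ((2m₂+1)(2m₃+1) F(−m₂,−m₃;3/2;z) − 1)² <
 ((2m₂+1) F(−m₂−1,−m₃;1/2;z) − 1) ((2m₃+1) F(−m₂,−m₃−1;1/2;z) − 1)`. -/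
theorem stmt_6 (m2 m3 : ℕ) (hm2 : 0 < m2) (hm3 : 0 < m3) (z : ℝ)
    (hz1 : 0 < z) (hz2 : z < 1) :
    z * ((2 * (m2 : ℝ) + 1) * (2 * (m3 : ℝ) + 1) * F32 m2 m3 z - 1) ^ 2 <
      ((2 * (m2 : ℝ) + 1) * F12 (m2 + 1) m3 z - 1) *
        ((2 * (m3 : ℝ) + 1) * F12 m2 (m3 + 1) z - 1) := by
  have hH := mul_pos (sub_pos.2 hz2) (gapFun_pos hm2 hm3 hz1 hz2)
  have hA := congrArg (eval z) (hypPoly_succ_left m2 m3)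
  have hB := congrArg (eval z) (hypPoly_succ_left m3 m2)
  have hC := congrArg (eval z) (hypPolyThreeHalves_eq m2 m3)
  rw [hypPoly_comm m3 m2, hypPoly_comm (m3 + 1) m2] at hB
  simp only [eval_add, eval_mul, eval_C, eval_X] at hA hB hC
  rw [F12_eq_eval, F12_eq_eval, F32_eq_eval]
  rw [eq_sub_of_add_eq hA, eq_sub_of_add_eq hB, eq_sub_of_add_eq hC, ← sub_pos]
  refine hH.trans_eq ?_
  rw [gapFun]
  ring
end

section
/- Let (m2, m3) ∈ S and 0 < z < 1. Then z < [ F(−m2,−m3;1/2;z)(1−z) / ((2m3+1) F(−m2,−m3;3/2;z)) + ( ((2m2+1)(2m3+1)+1) z − 1 ) / ((2m2+1)(2m3+1)) ] · [ F(−m2,−m3;1/2;z)(1−z) / ((2m2+1) F(−m2,−m3;3/2;z)) + ( ((2m2+1)(2m3+1)+1) z − 1 ) / ((2m2+1)(2m3+1)) ]. -/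
/-! ### The polynomial `F(-m,-n;3/2;·)` and its differential equation -/

open Polynomial in
/-- The polynomial `F(-m, -n; 3/2; X)`, with coefficients written through falling factorials so that
they vanish by themselves beyond `min m n`. -/
noncomputable def gPoly (m n : ℕ) : ℝ[X] :=
  ∑ j ∈ Finset.range (min m n + 1),
    monomial j ((4 : ℝ) ^ j * (m.descFactorial j : ℝ) * (n.descFactorial j : ℝ) /
      ((2 * j + 1).factorial : ℝ))

open Polynomial in
lemma gPoly_coeff (m n j : ℕ) :
    (gPoly m n).coeff j = (4 : ℝ) ^ j * (m.descFactorial j : ℝ) * (n.descFactorial j : ℝ) /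
      ((2 * j + 1).factorial : ℝ) := by
  unfold gPoly
  rw [finsetSum_coeff]
  simp only [coeff_monomial]
  rw [Finset.sum_ite_eq']
  split_ifs with h
  · rfl
  · rw [Finset.mem_range, not_lt] at h
    have : m < j ∨ n < j := by omega
    rcases this with h | h <;> simp [Nat.descFactorial_eq_zero_iff_lt.mpr h]

lemma cast_descFactorial_succ (m j : ℕ) :
    (m.descFactorial (j + 1) : ℝ) = ((m : ℝ) - j) * (m.descFactorial j : ℝ) := by
  rw [Nat.descFactorial_succ]
  rcases le_or_gt j m with h | h
  · push_cast [Nat.cast_sub h]; ring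
  · simp [Nat.descFactorial_eq_zero_iff_lt.mpr h]

/-- The two-term recurrence of the hypergeometric coefficients. -/
lemma gPoly_coeff_succ (m n j : ℕ) :
    ((j : ℝ) + 1) * ((j : ℝ) + 3 / 2) * (gPoly m n).coeff (j + 1) =
      ((m : ℝ) - j) * ((n : ℝ) - j) * (gPoly m n).coeff j := by
  rw [gPoly_coeff, gPoly_coeff, cast_descFactorial_succ, cast_descFactorial_succ]
  have h : ((2 * (j + 1) + 1).factorial : ℝ) =
      (2 * j + 3) * (2 * j + 2) * ((2 * j + 1).factorial : ℝ) := by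
    rw [show 2 * (j + 1) + 1 = (2 * j + 1) + 1 + 1 by ring, Nat.factorial_succ, Nat.factorial_succ]
    push_cast; ring
  rw [h]
  have h0 : ((2 * j + 1).factorial : ℝ) ≠ 0 := by positivity
  have h1 : (2 * (j : ℝ) + 3) ≠ 0 := by positivity
  have h2 : (2 * (j : ℝ) + 2) ≠ 0 := by positivity
  field_simp
  ring

lemma gPoly_coeff_nonneg (m n j : ℕ) : 0 ≤ (gPoly m n).coeff j := by
  rw [gPoly_coeff]; positivity

lemma gPoly_coeff_zero (m n : ℕ) : (gPoly m n).coeff 0 = 1 := by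
  rw [gPoly_coeff]; simp

open Polynomial in
lemma gPoly_ode (m n : ℕ) :
    X * derivative (derivative (gPoly m n)) - X * (X * derivative (derivative (gPoly m n))) +
      C (3 / 2) * derivative (gPoly m n) + C ((m : ℝ) + n - 1) * (X * derivative (gPoly m n)) =
      C ((m : ℝ) * n) * gPoly m n := by
  ext j
  rcases j with _ | _ | j
  · have := gPoly_coeff_succ m n 0
    simp only [coeff_add, coeff_sub, coeff_C_mul, coeff_X_mul_zero, coeff_derivative]
    push_cast at this ⊢
    linarith
  · have := gPoly_coeff_succ m n 1
    simp only [coeff_add, coeff_sub, coeff_C_mul, coeff_X_mul, coeff_X_mul_zero, coeff_derivative]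
    push_cast at this ⊢
    linarith
  · have := gPoly_coeff_succ m n (j + 2)
    simp only [coeff_add, coeff_sub, coeff_C_mul, coeff_X_mul, coeff_derivative]
    push_cast at this ⊢
    linarith

open Polynomial in
lemma gPoly_ode_eval (m n : ℕ) (z : ℝ) :
    z * (1 - z) * (derivative (derivative (gPoly m n))).eval z +
      (3 / 2 + ((m : ℝ) + n - 1) * z) * (derivative (gPoly m n)).eval z =
      (m : ℝ) * n * (gPoly m n).eval z := by
  have := congrArg (eval z) (gPoly_ode m n)
  simp only [eval_add, eval_sub, eval_mul, eval_X, eval_C] at this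
  linarith

open Polynomial in
lemma gPoly_ode_deriv_eval (m n : ℕ) (z : ℝ) :
    z * (1 - z) * (derivative (derivative (derivative (gPoly m n)))).eval z +
      (5 / 2 + ((m : ℝ) + n - 3) * z) * (derivative (derivative (gPoly m n))).eval z +
      ((m : ℝ) + n - 1) * (derivative (gPoly m n)).eval z =
      (m : ℝ) * n * (derivative (gPoly m n)).eval z := by
  have := congrArg (fun P => eval z (derivative P)) (gPoly_ode m n)
  simp only [derivative_add, derivative_sub, derivative_mul, derivative_X, derivative_C,
    eval_add, eval_sub, eval_mul, eval_X, eval_C, eval_zero, eval_one] at this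
  linarith

open Polynomial in
lemma eval_ge_coeff_zero {P : ℝ[X]} (hP : ∀ j, 0 ≤ P.coeff j) {z : ℝ} (hz : 0 ≤ z) :
    P.coeff 0 ≤ P.eval z := by
  rw [eval_eq_sum_range, Finset.sum_range_succ']
  have : 0 ≤ ∑ k ∈ Finset.range P.natDegree, P.coeff (k + 1) * z ^ (k + 1) :=
    Finset.sum_nonneg fun k _ => mul_nonneg (hP _) (pow_nonneg hz _)
  simpa using this

open Polynomial in
lemma derivative_coeff_nonneg {P : ℝ[X]} (hP : ∀ j, 0 ≤ P.coeff j) (j : ℕ) :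
    0 ≤ (derivative P).coeff j := by
  rw [coeff_derivative]
  exact mul_nonneg (hP _) (by positivity)

open Polynomial in
lemma F32_eq (m n : ℕ) (z : ℝ) : F32 m n z = (gPoly m n).eval z := by
  unfold F32 gPoly
  rw [eval_finsetSum, Finset.mul_sum]
  refine Finset.sum_congr rfl fun j hj => ?_
  rw [Finset.mem_range] at hj
  rw [eval_monomial, ← Nat.factorial_mul_descFactorial (show j ≤ m by omega),
    ← Nat.factorial_mul_descFactorial (show j ≤ n by omega)]
  push_cast
  have h0 : ((m - j).factorial : ℝ) ≠ 0 := by positivity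
  have h1 : ((n - j).factorial : ℝ) ≠ 0 := by positivity
  field_simp

open Polynomial in
/-- The contiguity relation `F(-m,-n;1/2;z) = (1 + 2 z d/dz) F(-m,-n;3/2;z)`. -/
lemma F12_eq (m n : ℕ) (z : ℝ) :
    F12 m n z = (gPoly m n).eval z + 2 * z * (derivative (gPoly m n)).eval z := by
  unfold F12 gPoly
  rw [derivative_sum, eval_finsetSum, eval_finsetSum, Finset.mul_sum, Finset.mul_sum,
    ← Finset.sum_add_distrib]
  refine Finset.sum_congr rfl fun j hj => ?_
  rw [Finset.mem_range] at hj
  rw [derivative_monomial, eval_monomial, eval_monomial,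
    ← Nat.factorial_mul_descFactorial (show j ≤ m by omega),
    ← Nat.factorial_mul_descFactorial (show j ≤ n by omega), Nat.factorial_succ]
  have h0 : ((m - j).factorial : ℝ) ≠ 0 := by positivity
  have h1 : ((n - j).factorial : ℝ) ≠ 0 := by positivity
  have h2 : ((2 * j).factorial : ℝ) ≠ 0 := by positivity
  have h3 : (2 * (j : ℝ) + 1) ≠ 0 := by positivity
  rcases j with _ | j
  · simp
    field_simp
  · push_cast at h3 ⊢
    field_simp
    simp
    ring

/-! ### The barrier principle and log-concavity -/

/-- A function positive at `0` whose derivative is positive at each of its zeros in `(0, 1)` stays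
positive on `(0, 1)`. -/
lemma pos_of_deriv_pos_at_zeros {h h' : ℝ → ℝ} (hd : ∀ z, 0 ≤ z → z < 1 → HasDerivAt h (h' z) z)
    (h0 : 0 < h 0) (hc : ∀ z, 0 < z → z < 1 → h z = 0 → 0 < h' z) {z : ℝ} (hz : 0 < z)
    (hz1 : z < 1) : 0 < h z := by
  have hnn : ∀ y, 0 ≤ y → y < 1 → 0 ≤ h y := by
    intro y hy hy1
    have := image_le_of_deriv_right_lt_deriv_boundary' (f := fun _ => (0 : ℝ)) (f' := fun _ => 0)
      (a := 0) (b := y) (B := h) (B' := h') continuousOn_const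
      (fun x _ => (hasDerivAt_const x 0).hasDerivWithinAt) h0.le
      (fun x hx => (hd x hx.1 (hx.2.trans_lt hy1)).continuousAt.continuousWithinAt)
      (fun x hx => (hd x hx.1 (hx.2.trans hy1)).hasDerivWithinAt)
      (fun x hx hx0 => by
        rcases hx.1.eq_or_lt with h | h
        · subst h; linarith
        · exact hc x h (hx.2.trans hy1) hx0.symm)
    exact this (Set.right_mem_Icc.mpr hy)
  rcases (hnn z hz.le hz1).eq_or_lt with hz0 | hz0
  · exfalso
    have hmin : IsLocalMin h z := by
      filter_upwards [Ioo_mem_nhds hz hz1] with y hy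
      rw [← hz0]
      exact hnn y hy.1.le hy.2
    have := hmin.hasDerivAt_eq_zero (hd z hz.le hz1)
    have := hc z hz hz1 hz0.symm
    linarith
  · exact hz0

open Polynomial in
/-- Strict log-concavity of `F(-m,-n;3/2;·)` on `(0, 1)`. -/
lemma gPoly_logconcave (m n : ℕ) (hm : 1 ≤ m) (hn : 1 ≤ n) {z : ℝ} (hz : 0 < z) (hz1 : z < 1) :
    0 < (derivative (gPoly m n)).eval z ^ 2 -
      (gPoly m n).eval z * (derivative (derivative (gPoly m n))).eval z := by
  have hm' : (1 : ℝ) ≤ m := by exact_mod_cast hm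
  have hn' : (1 : ℝ) ≤ n := by exact_mod_cast hn
  refine pos_of_deriv_pos_at_zeros
    (h := fun z => (derivative (gPoly m n)).eval z ^ 2 -
      (gPoly m n).eval z * (derivative (derivative (gPoly m n))).eval z)
    (h' := fun z => (derivative (gPoly m n)).eval z * (derivative (derivative (gPoly m n))).eval z -
      (gPoly m n).eval z * (derivative (derivative (derivative (gPoly m n)))).eval z)
    ?_ ?_ ?_ hz hz1
  · intro y _ _
    have d0 := (gPoly m n).hasDerivAt y
    have d1 := (derivative (gPoly m n)).hasDerivAt y
    have d2 := (derivative (derivative (gPoly m n))).hasDerivAt y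
    refine HasDerivAt.congr_deriv ((d1.pow 2).sub (d0.mul d2)) ?_
    norm_num
    ring
  · have e1 := gPoly_coeff_succ m n 0
    have e2 := gPoly_coeff_succ m n 1
    have e0 := gPoly_coeff_zero m n
    simp only [← coeff_zero_eq_eval_zero, coeff_derivative]
    rw [e0] at e1 ⊢
    norm_num at e1 e2 ⊢
    have e1' : (gPoly m n).coeff 1 = 2 / 3 * (m * n) := by linarith
    rw [e1'] at e2 ⊢
    have e2' : (gPoly m n).coeff 2 = (m - 1) * (n - 1) * (2 / 3 * (m * n)) / 5 := by linarith
    rw [e2']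
    have h1 : 0 < (m : ℝ) * n := by positivity
    have h2 : ((m : ℝ) - 1) * (n - 1) ≤ m * n := by nlinarith
    have h3 := mul_le_mul_of_nonneg_right h2 h1.le
    nlinarith [mul_pos h1 h1]
  · intro y hy hy1 hL
    have hnng := gPoly_coeff_nonneg m n
    have hg := eval_ge_coeff_zero hnng hy.le
    have hp := eval_ge_coeff_zero (derivative_coeff_nonneg hnng) hy.le
    have hp1 := (derivative_coeff_nonneg (derivative_coeff_nonneg hnng) 0).trans
      (eval_ge_coeff_zero (derivative_coeff_nonneg (derivative_coeff_nonneg hnng)) hy.le)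
    have e1 := gPoly_coeff_succ m n 0
    rw [gPoly_coeff_zero] at hg e1
    rw [coeff_derivative] at hp
    have o1 := gPoly_ode_eval m n y
    have o2 := gPoly_ode_deriv_eval m n y
    norm_num at e1 hp
    have hmn : 0 < (m : ℝ) * n := by positivity
    generalize eval y (gPoly m n) = g at *
    generalize eval y (derivative (derivative (derivative (gPoly m n)))) = p2 at *
    generalize eval y (derivative (derivative (gPoly m n))) = p1 at *
    generalize eval y (derivative (gPoly m n)) = p at *
    have hp' : 0 < p := by linarith
    have hg' : 0 < g := by linarith
    have hw : 0 < 1 - y := by linarith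
    have key : (2 * y - 1) * p < ((m : ℝ) + n - 1) * g := by
      rcases le_or_gt (2 * y) 1 with h | h
      · have : (2 * y - 1) * p ≤ 0 := mul_nonpos_of_nonpos_of_nonneg (by linarith) hp'.le
        have : 0 < ((m : ℝ) + n - 1) * g := mul_pos (by linarith) hg'
        linarith
      · set K := 3 / 2 + ((m : ℝ) + n - 1) * y with hK
        have hKpos : 0 < K := by
          have : 0 ≤ ((m : ℝ) + n - 1) * y := mul_nonneg (by linarith) hy.le
          linarith
        have h1 : K * p ≤ m * n * g := by
          have : 0 ≤ y * (1 - y) * p1 := by positivity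
          linarith
        have h2 : (2 * y - 1) * (m * n) < ((m : ℝ) + n - 1) * K := by
          have a1 : (2 * y - 1) * ((m : ℝ) * n) ≤ y * (m * n) :=
            mul_le_mul_of_nonneg_right (by linarith) hmn.le
          have a2 : (m : ℝ) * n ≤ ((m : ℝ) + n - 1) ^ 2 := by nlinarith
          have a3 := mul_le_mul_of_nonneg_left a2 hy.le
          rw [hK]; nlinarith
        have h3 := mul_le_mul_of_nonneg_left h1 (show 0 ≤ 2 * y - 1 by linarith)
        have h4 := mul_lt_mul_of_pos_right h2 hg'
        by_contra hcon
        have h5 := mul_le_mul_of_nonneg_left (not_lt.mp hcon) hKpos.le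
        linarith
    have hprod : y * (1 - y) * (p * p1 - g * p2) =
        p * (((m : ℝ) + n - 1) * g - (2 * y - 1) * p) := by
      linear_combination p * o1 - g * o2 - (5 / 2 + ((m : ℝ) + n - 3) * y) * hL
    have : 0 < y * (1 - y) * (p * p1 - g * p2) := by
      rw [hprod]; exact mul_pos hp' (by linarith)
    exact (mul_pos_iff_of_pos_left (mul_pos hy hw)).mp this

/-! ### The two polynomial inequalities behind the barrier -/

/-- `G = A (N - (s - 1) q) - (q - 1) (q + 2) N D`, where `A = N q² - s q + 1`, `D = N + 2 - s q`,
homogenized by `q = Q / W`. -/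
def formG (N s Q W : ℝ) : ℝ :=
  (N * Q ^ 2 - s * Q * W + W ^ 2) * ((N + 2) * W - s * Q + Q - 2 * W) -
    (Q - W) * (Q + 2 * W) * N * ((N + 2) * W - s * Q)

/-- `B = (A' D + s A) (A (q - 2) + D E) - 2 A D (N D + A)`, where `A = N q² - s q + 1`,
`A' = 2 N q - s`, `D = N + 2 - s q`, `E = q (N - s) + 1`, homogenized by `q = Q / W`. -/
def formB (N s Q W : ℝ) : ℝ :=
  ((2 * N * Q - s * W) * ((N + 2) * W - s * Q) + s * (N * Q ^ 2 - s * Q * W + W ^ 2)) *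
      ((N * Q ^ 2 - s * Q * W + W ^ 2) * (Q - 2 * W) +
        ((N + 2) * W - s * Q) * (Q * (N - s) + W) * W) -
    2 * (N * Q ^ 2 - s * Q * W + W ^ 2) * ((N + 2) * W - s * Q) *
      (N * ((N + 2) * W - s * Q) * W + (N * Q ^ 2 - s * Q * W + W ^ 2))

/-- The coordinates are `a = 9 + x`, `b = 9 + y`, `q = (1 + 13/8 r) / (1 + r)`; in them every
coefficient is nonnegative. -/
lemma formG_pos_aux (x y r : ℝ) (hx : 0 ≤ x) (hy : 0 ≤ y) (hr : 0 ≤ r) :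
    0 < formG ((9 + x) * (9 + y)) ((9 + x) + (9 + y)) (1 + 13 / 8 * r) (1 + r) := by
  unfold formG
  ring_nf
  positivity

/-- The coordinates are `a = 9 + x`, `b = 9 + y`, `q = (13/8 + 2 r) / (1 + r)`; in them every
coefficient is nonnegative. -/
lemma formB_pos_aux_mid (x y r : ℝ) (hx : 0 ≤ x) (hy : 0 ≤ y) (hr : 0 ≤ r) :
    0 < formB ((9 + x) * (9 + y)) ((9 + x) + (9 + y)) (13 / 8 + 2 * r) (1 + r) := by
  unfold formB
  ring_nf
  positivity

/-- For `q ≥ 2` only `D > 0` and `s ≥ 18` matter, so `N` is expressed through `D = N + 2 - s q`. -/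
lemma formB_pos_aux_large (u D v : ℝ) (hu : 0 ≤ u) (hD : 0 < D) (hv : 0 ≤ v) :
    0 < formB (D + (18 + v) * (2 + u) - 2) (18 + v) (2 + u) 1 := by
  unfold formB
  ring_nf
  positivity

lemma formG_scale (N s q W : ℝ) : formG N s (q * W) W = W ^ 3 * formG N s q 1 := by
  unfold formG; ring

lemma formB_scale (N s q W : ℝ) : formB N s (q * W) W = W ^ 5 * formB N s q 1 := by
  unfold formB; ring

lemma formG_pos {a b q : ℝ} (ha : 9 ≤ a) (hb : 9 ≤ b) (hq : 1 ≤ q) (hq' : q < 13 / 8) :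
    0 < formG (a * b) (a + b) q 1 := by
  have hd : 0 < 13 / 8 - q := by linarith
  have hr : 0 ≤ (q - 1) / (13 / 8 - q) := div_nonneg (by linarith) hd.le
  have h := formG_pos_aux (a - 9) (b - 9) _ (by linarith) (by linarith) hr
  have hQ : 1 + 13 / 8 * ((q - 1) / (13 / 8 - q)) = q * (1 + (q - 1) / (13 / 8 - q)) := by
    have := div_mul_cancel₀ (q - 1) hd.ne'
    linarith
  rw [hQ, formG_scale, add_sub_cancel, add_sub_cancel] at h
  exact (mul_pos_iff_of_pos_left (by positivity)).mp h

lemma formB_pos {a b q : ℝ} (ha : 9 ≤ a) (hb : 9 ≤ b) (hq : 13 / 8 ≤ q)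
    (hD : 0 < a * b + 2 - (a + b) * q) : 0 < formB (a * b) (a + b) q 1 := by
  rcases lt_or_ge q 2 with h2 | h2
  · have hd : 0 < 2 - q := by linarith
    have hr : 0 ≤ (q - 13 / 8) / (2 - q) := div_nonneg (by linarith) hd.le
    have h := formB_pos_aux_mid (a - 9) (b - 9) _ (by linarith) (by linarith) hr
    have hQ : 13 / 8 + 2 * ((q - 13 / 8) / (2 - q)) = q * (1 + (q - 13 / 8) / (2 - q)) := by
      field_simp; ring
    rw [hQ, formB_scale, add_sub_cancel, add_sub_cancel] at h
    exact (mul_pos_iff_of_pos_left (by positivity)).mp h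
  · have h := formB_pos_aux_large (q - 2) _ (a + b - 18) (by linarith) hD (by linarith)
    convert h using 2 <;> ring

/-! ### The case `m, n ≥ 4` -/

/-- The claim cleared of denominators: with `q = f / g`, it says
`(1 - z) (N q² - s q + 1) > z N (N + 2 - s q)`, where `N = a b` and `s = a + b`. -/
lemma claim_of_pos {a b f g z : ℝ} (ha : 0 < a) (hb : 0 < b) (hg : 0 < g) (hz1 : z < 1)
    (h : 0 < (1 - z) * (a * b * (f / g) ^ 2 - (a + b) * (f / g) + 1) -
      z * (a * b) * (a * b + 2 - (a + b) * (f / g))) :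
    z < (f * (1 - z) / (b * g) + ((a * b + 1) * z - 1) / (a * b)) *
        (f * (1 - z) / (a * g) + ((a * b + 1) * z - 1) / (a * b)) := by
  have hw : 0 < 1 - z := by linarith
  have e1 : f * (1 - z) / (b * g) = (f / g) * (1 - z) / b := by field_simp
  have e2 : f * (1 - z) / (a * g) = (f / g) * (1 - z) / a := by field_simp
  rw [e1, e2]
  generalize f / g = q at *
  have key : (q * (1 - z) / b + ((a * b + 1) * z - 1) / (a * b)) *
        (q * (1 - z) / a + ((a * b + 1) * z - 1) / (a * b)) - z =
      (1 - z) / (a * b) ^ 2 * ((1 - z) * (a * b * q ^ 2 - (a + b) * q + 1) -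
      z * (a * b) * (a * b + 2 - (a + b) * q)) := by
    field_simp
    ring
  have : 0 < (1 - z) / (a * b) ^ 2 * ((1 - z) * (a * b * q ^ 2 - (a + b) * q + 1) -
      z * (a * b) * (a * b + 2 - (a + b) * q)) := by positivity
  linarith

/-- At a zero of `(1 - z) A - z N D` the two quantities `z` and `1 - z` are proportional to `A` and
`N D`. Log-concavity (`hK`) then excludes `q < 13/8`, and beyond that the derivative, which the
Riccati equation (`hq'`) turns into a positive multiple of `formB`, is positive. -/
lemma deriv_pos_at_zero {a b q q' z : ℝ} (ha : 9 ≤ a) (hb : 9 ≤ b) (hz : 0 < z) (hz1 : z < 1)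
    (hq : 1 < q)
    (hq' : 2 * z * (1 - z) * q' = z * (a * b - (a + b - 1) * q) - (1 - z) * q * (q - 1))
    (hK : z * (a * b - (a + b - 1) * q) < (1 - z) * (q - 1) * (q + 2))
    (h0 : (1 - z) * (a * b * q ^ 2 - (a + b) * q + 1) -
      z * (a * b) * (a * b + 2 - (a + b) * q) = 0) :
    0 < -(a * b * q ^ 2 - (a + b) * q + 1) - a * b * (a * b + 2 - (a + b) * q) +
      ((1 - z) * (2 * (a * b) * q - (a + b)) + z * (a * b) * (a + b)) * q' := by
  have hw : 0 < 1 - z := by linarith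
  have hN : 0 < a * b := by positivity
  have hA : 0 < a * b * q ^ 2 - (a + b) * q + 1 := by
    have : 0 < (a * q - 1) * (b * q - 1) := mul_pos (by nlinarith) (by nlinarith)
    linarith
  have hD : 0 < a * b + 2 - (a + b) * q := by
    have h1 : 0 < z * (a * b) * (a * b + 2 - (a + b) * q) := by
      have := mul_pos hw hA
      linarith
    exact (mul_pos_iff_of_pos_left (by positivity)).mp h1
  obtain ⟨A, hAdef⟩ : ∃ A, A = a * b * q ^ 2 - (a + b) * q + 1 := ⟨_, rfl⟩
  obtain ⟨D, hDdef⟩ : ∃ D, D = a * b + 2 - (a + b) * q := ⟨_, rfl⟩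
  have hG : ¬ 0 < formG (a * b) (a + b) q 1 := by
    intro hG
    have e : formG (a * b) (a + b) q 1 =
        A * (a * b - (a + b - 1) * q) - (q - 1) * (q + 2) * (a * b) * D := by
      rw [hAdef, hDdef]; unfold formG; ring
    rw [e] at hG
    rw [← hAdef, ← hDdef] at h0
    rw [← hAdef] at hA
    have h1 := mul_lt_mul_of_pos_left hK hA
    have h2 := mul_pos hz hG
    have h3 : A * ((1 - z) * (q - 1) * (q + 2)) = z * ((q - 1) * (q + 2) * (a * b) * D) := by
      linear_combination (q - 1) * (q + 2) * h0
    linarith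
  have hq2 : 13 / 8 ≤ q := by
    by_contra hc
    exact hG (formG_pos ha hb hq.le (not_le.mp hc))
  have hB := formB_pos ha hb hq2 hD
  rw [← hAdef, ← hDdef] at h0 ⊢
  rw [← hAdef] at hA
  rw [← hDdef] at hD
  have hS : 0 < A + a * b * D := by positivity
  have hzS : z * (A + a * b * D) = A := by linarith
  have hwS : (1 - z) * (A + a * b * D) = a * b * D := by linarith
  have e : (A + a * b * D) ^ 2 * (2 * z * (1 - z)) * (-A - a * b * D +
      ((1 - z) * (2 * (a * b) * q - (a + b)) + z * (a * b) * (a + b)) * q') =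
      a * b * formB (a * b) (a + b) q 1 := by
    calc _ = -2 * (z * (A + a * b * D)) * ((1 - z) * (A + a * b * D)) * (A + a * b * D) +
        (((1 - z) * (A + a * b * D)) * (2 * (a * b) * q - (a + b)) +
          (z * (A + a * b * D)) * (a * b) * (a + b)) *
        ((A + a * b * D) * (2 * z * (1 - z) * q')) := by ring
      _ = -2 * (z * (A + a * b * D)) * ((1 - z) * (A + a * b * D)) * (A + a * b * D) +
        (((1 - z) * (A + a * b * D)) * (2 * (a * b) * q - (a + b)) +
          (z * (A + a * b * D)) * (a * b) * (a + b)) *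
        ((z * (A + a * b * D)) * (a * b - (a + b - 1) * q) -
          ((1 - z) * (A + a * b * D)) * q * (q - 1)) := by rw [hq']; ring
      _ = _ := by
        rw [hzS, hwS, hAdef, hDdef]; unfold formB; ring
  have h1 : 0 < a * b * formB (a * b) (a + b) q 1 := mul_pos hN hB
  rw [← e] at h1
  exact (mul_pos_iff_of_pos_left (by positivity)).mp h1

open Polynomial in
lemma barrier_pos (m n : ℕ) (hm : 4 ≤ m) (hn : 4 ≤ n) {z : ℝ} (hz : 0 < z) (hz1 : z < 1) :
    0 < (1 - z) * ((2 * (m : ℝ) + 1) * (2 * n + 1) * (F12 m n z / F32 m n z) ^ 2 -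
        ((2 * (m : ℝ) + 1) + (2 * n + 1)) * (F12 m n z / F32 m n z) + 1) -
      z * ((2 * (m : ℝ) + 1) * (2 * n + 1)) * ((2 * (m : ℝ) + 1) * (2 * n + 1) + 2 -
        ((2 * (m : ℝ) + 1) + (2 * n + 1)) * (F12 m n z / F32 m n z)) := by
  have hm' : (4 : ℝ) ≤ m := by exact_mod_cast hm
  have hn' : (4 : ℝ) ≤ n := by exact_mod_cast hn
  obtain ⟨a, ha⟩ : ∃ a : ℝ, a = 2 * (m : ℝ) + 1 := ⟨_, rfl⟩
  obtain ⟨b, hb⟩ : ∃ b : ℝ, b = 2 * (n : ℝ) + 1 := ⟨_, rfl⟩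
  rw [← ha, ← hb]
  have ha9 : 9 ≤ a := by linarith
  have hb9 : 9 ≤ b := by linarith
  have hnng := gPoly_coeff_nonneg m n
  have hgpos : ∀ y : ℝ, 0 ≤ y → 0 < (gPoly m n).eval y := by
    intro y hy
    have := eval_ge_coeff_zero hnng hy
    rw [gPoly_coeff_zero] at this
    linarith
  have hppos : ∀ y : ℝ, 0 ≤ y → 0 < (derivative (gPoly m n)).eval y := by
    intro y hy
    have h := eval_ge_coeff_zero (derivative_coeff_nonneg hnng) hy
    have e1 := gPoly_coeff_succ m n 0
    rw [coeff_derivative] at h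
    rw [gPoly_coeff_zero] at e1
    norm_num at e1 h
    have : 0 < (m : ℝ) * n := by positivity
    linarith
  simp only [F12_eq, F32_eq]
  obtain ⟨q, hqdef⟩ : ∃ q : ℝ → ℝ, q = fun y => ((gPoly m n).eval y +
    2 * y * (derivative (gPoly m n)).eval y) / (gPoly m n).eval y := ⟨_, rfl⟩
  -- the numerator uses `f' = (g + 2 z g')' = 3 g' + 2 z g''`
  obtain ⟨q', hq'def⟩ : ∃ q' : ℝ → ℝ, q' = fun y =>
    ((3 * (derivative (gPoly m n)).eval y +
        2 * y * (derivative (derivative (gPoly m n))).eval y) * (gPoly m n).eval y -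
      ((gPoly m n).eval y + 2 * y * (derivative (gPoly m n)).eval y) *
        (derivative (gPoly m n)).eval y) / (gPoly m n).eval y ^ 2 := ⟨_, rfl⟩
  have hqd : ∀ y, 0 ≤ y → HasDerivAt q (q' y) y := by
    intro y hy
    have d0 := (gPoly m n).hasDerivAt y
    have d1 := (derivative (gPoly m n)).hasDerivAt y
    have d2 := (d0.add (((hasDerivAt_id y).const_mul 2).mul d1)).div d0 (hgpos y hy).ne'
    rw [hqdef, hq'def]
    refine HasDerivAt.congr_deriv d2 ?_
    simp only [Pi.add_apply, Pi.mul_apply, id]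
    congr 2
    ring
  have main := pos_of_deriv_pos_at_zeros
    (h := fun z => (1 - z) * (a * b * q z ^ 2 - (a + b) * q z + 1) -
      z * (a * b) * (a * b + 2 - (a + b) * q z))
    (h' := fun z => -(a * b * q z ^ 2 - (a + b) * q z + 1) - a * b * (a * b + 2 - (a + b) * q z) +
      ((1 - z) * (2 * (a * b) * q z - (a + b)) + z * (a * b) * (a + b)) * q' z)
    ?_ ?_ ?_ hz hz1
  · simpa only [hqdef] using main
  · intro y hy hy1
    have dq := hqd y hy
    have di := hasDerivAt_id y
    have d := ((di.const_sub 1).mul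
      ((((dq.pow 2).const_mul (a * b)).sub (dq.const_mul (a + b))).add_const 1)).sub
      ((di.mul_const (a * b)).mul ((dq.const_mul (a + b)).const_sub (a * b + 2)))
    refine HasDerivAt.congr_deriv d ?_
    simp
    ring
  · have q0 : q 0 = 1 := by
      rw [hqdef]
      simp [(hgpos 0 le_rfl).ne']
    simp only [q0]
    nlinarith
  · intro y hy hy1 h0
    have hg := hgpos y hy.le
    have hp := hppos y hy.le
    have o1 := gPoly_ode_eval m n y
    have hL := gPoly_logconcave m n (by omega) (by omega) hy hy1
    have hw : 0 < 1 - y := by linarith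
    have hm2 : (m : ℝ) = (a - 1) / 2 := by linarith
    have hn2 : (n : ℝ) = (b - 1) / 2 := by linarith
    rw [hm2, hn2] at o1
    have hqy : q y = 1 + 2 * y * (derivative (gPoly m n)).eval y / (gPoly m n).eval y := by
      rw [hqdef]; field_simp
    have hq'y : q' y = ((3 * (derivative (gPoly m n)).eval y +
        2 * y * (derivative (derivative (gPoly m n))).eval y) * (gPoly m n).eval y -
      ((gPoly m n).eval y + 2 * y * (derivative (gPoly m n)).eval y) *
        (derivative (gPoly m n)).eval y) / (gPoly m n).eval y ^ 2 := by rw [hq'def]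
    refine deriv_pos_at_zero ha9 hb9 hy hy1 ?_ ?_ ?_ h0
    · rw [hqy]
      have : 0 < 2 * y * (derivative (gPoly m n)).eval y / (gPoly m n).eval y := by positivity
      linarith
    · rw [hqy, hq'y]
      generalize eval y (gPoly m n) = g at *
      generalize eval y (derivative (derivative (gPoly m n))) = p1 at *
      generalize eval y (derivative (gPoly m n)) = p at *
      field_simp
      linear_combination (4 * y * g) * o1
    · rw [hqy]
      generalize eval y (gPoly m n) = g at *
      generalize eval y (derivative (derivative (gPoly m n))) = p1 at *
      generalize eval y (derivative (gPoly m n)) = p at *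
      -- the difference of the two sides is `4 z² (1 - z) (g'² - g g'') / g²`
      have e : (1 - y) * (1 + 2 * y * p / g - 1) * (1 + 2 * y * p / g + 2) -
          y * (a * b - (a + b - 1) * (1 + 2 * y * p / g)) =
          4 * y ^ 2 * (1 - y) * (p ^ 2 - g * p1) / g ^ 2 := by
        field_simp
        linear_combination (4 * y * g) * o1
      have : 0 < 4 * y ^ 2 * (1 - y) * (p ^ 2 - g * p1) / g ^ 2 := by positivity
      linarith

/-! ### The cases `m = 1, 2, 3` -/

lemma F12_sum (m n : ℕ) (hmn : m ≤ n) (z : ℝ) : F12 m n z = ∑ j ∈ Finset.range (m + 1),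
    (4 : ℝ) ^ j * (m.descFactorial j : ℝ) * (n.descFactorial j : ℝ) /
      ((2 * j).factorial : ℝ) * z ^ j := by
  unfold F12
  rw [Finset.mul_sum, min_eq_left hmn]
  refine Finset.sum_congr rfl fun j hj => ?_
  rw [Finset.mem_range] at hj
  rw [← Nat.factorial_mul_descFactorial (show j ≤ m by omega),
    ← Nat.factorial_mul_descFactorial (show j ≤ n by omega)]
  push_cast
  have h0 : ((m - j).factorial : ℝ) ≠ 0 := by positivity
  have h1 : ((n - j).factorial : ℝ) ≠ 0 := by positivity
  field_simp

lemma F32_sum (m n : ℕ) (hmn : m ≤ n) (z : ℝ) : F32 m n z = ∑ j ∈ Finset.range (m + 1),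
    (4 : ℝ) ^ j * (m.descFactorial j : ℝ) * (n.descFactorial j : ℝ) /
      ((2 * j + 1).factorial : ℝ) * z ^ j := by
  rw [F32_eq]
  unfold gPoly
  rw [Polynomial.eval_finsetSum, min_eq_left hmn]
  simp only [Polynomial.eval_monomial]

/-- The substitution `z = t / (1 + t)`, with `f` and `g` cleared by the factor `(1 + t)^m`. -/
lemma pos_of_homogenized {N s t z q f g : ℝ} (ht : 0 < t) (hz : z = t / (1 + t)) (hg : 0 < g)
    (hq : q = f / g)
    (h : 0 < N * f ^ 2 - s * f * g + g ^ 2 - t * N * ((N + 2) * g ^ 2 - s * f * g)) :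
    0 < (1 - z) * (N * q ^ 2 - s * q + 1) - z * N * (N + 2 - s * q) := by
  have h1 : 0 < 1 + t := by linarith
  have e : (1 - z) * (N * q ^ 2 - s * q + 1) - z * N * (N + 2 - s * q) =
      (N * f ^ 2 - s * f * g + g ^ 2 - t * N * ((N + 2) * g ^ 2 - s * f * g)) /
        ((1 + t) * g ^ 2) := by
    rw [hz, hq]
    field_simp
    ring
  rw [e]
  positivity

/-- Since `t (t - τ)² ≥ 0`, a cubic is positive on `t ≥ 0` as soon as the quadratic obtained from
`t³ ≥ 2 τ t² - τ² t` has negative discriminant. -/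
lemma cubic_pos {c₀ c₁ c₂ c₃ t : ℝ} (τ : ℝ) (h0 : 0 < c₀) (h3 : 0 ≤ c₃) (ht : 0 ≤ t)
    (hd : 0 < 4 * c₀ * (c₂ + 2 * c₃ * τ) - (c₁ - c₃ * τ ^ 2) ^ 2) :
    0 < c₀ + c₁ * t + c₂ * t ^ 2 + c₃ * t ^ 3 := by
  have h1 : 0 ≤ c₃ * t * (t - τ) ^ 2 := by positivity
  have hq : 0 < c₀ + (c₁ - c₃ * τ ^ 2) * t + (c₂ + 2 * c₃ * τ) * t ^ 2 := by
    rcases ht.eq_or_lt with h | h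
    · simpa [← h] using h0
    · have h2 : 0 < (4 * c₀ * (c₂ + 2 * c₃ * τ) - (c₁ - c₃ * τ ^ 2) ^ 2) * t ^ 2 := by positivity
      have h4 : 0 < 4 * c₀ * (c₀ + (c₁ - c₃ * τ ^ 2) * t + (c₂ + 2 * c₃ * τ) * t ^ 2) := by
        nlinarith [sq_nonneg (2 * c₀ + (c₁ - c₃ * τ ^ 2) * t)]
      exact (mul_pos_iff_of_pos_left (by positivity)).mp h4
  nlinarith

lemma exists_t {z : ℝ} (hz : 0 < z) (hz1 : z < 1) : ∃ t : ℝ, 0 < t ∧ z = t / (1 + t) := by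
  have hw : 0 < 1 - z := by linarith
  refine ⟨z / (1 - z), by positivity, ?_⟩
  field_simp
  ring

lemma small_one (k : ℕ) {z : ℝ} (hz : 0 < z) (hz1 : z < 1) :
    0 < (1 - z) * (3 * (2 * (k + 5 : ℝ) + 1) * (F12 1 (k + 5) z / F32 1 (k + 5) z) ^ 2 -
        (3 + (2 * (k + 5 : ℝ) + 1)) * (F12 1 (k + 5) z / F32 1 (k + 5) z) + 1) -
      z * (3 * (2 * (k + 5 : ℝ) + 1)) * (3 * (2 * (k + 5 : ℝ) + 1) + 2 -
        (3 + (2 * (k + 5 : ℝ) + 1)) * (F12 1 (k + 5) z / F32 1 (k + 5) z)) := by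
  obtain ⟨t, ht, hzt⟩ := exists_t hz hz1
  rw [F12_sum _ _ (by omega), F32_sum _ _ (by omega)]
  simp only [Finset.sum_range_succ, Finset.sum_range_zero, cast_descFactorial_succ,
    Nat.descFactorial_zero, Nat.factorial]
  push_cast
  have hk : (0 : ℝ) ≤ k := Nat.cast_nonneg k
  generalize (k : ℝ) = k at *
  have h1 : 0 < 1 + t := by linarith
  refine pos_of_homogenized (f := 1 + t + 2 * (k + 5) * t) (g := 1 + t + 2 / 3 * (k + 5) * t)
    ht hzt (by positivity) ?_ ?_
  · simp only [zero_add, sub_zero]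
    rw [hzt, div_eq_div_iff (by positivity) (by positivity)]
    field_simp
    ring
  -- `c₀, c₁, c₂` are the coefficients of `1, t, t²` (the nonnegative `t³` part is dropped)
  · have hc := cubic_pos (c₀ := 20 + 4 * k) (c₁ := -173 - 182 / 3 * k - 16 / 3 * k ^ 2)
      (c₂ := 3766 / 9 + 2884 / 9 * k + 664 / 9 * k ^ 2 + 16 / 3 * k ^ 3) (c₃ := 0) (t := t) 0
      (by positivity) le_rfl ht.le (by ring_nf; positivity)
    refine lt_of_lt_of_le hc (sub_nonneg.mp ?_)
    ring_nf
    positivity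

lemma small_two (k : ℕ) {z : ℝ} (hz : 0 < z) (hz1 : z < 1) :
    0 < (1 - z) * (5 * (2 * (k + 3 : ℝ) + 1) * (F12 2 (k + 3) z / F32 2 (k + 3) z) ^ 2 -
        (5 + (2 * (k + 3 : ℝ) + 1)) * (F12 2 (k + 3) z / F32 2 (k + 3) z) + 1) -
      z * (5 * (2 * (k + 3 : ℝ) + 1)) * (5 * (2 * (k + 3 : ℝ) + 1) + 2 -
        (5 + (2 * (k + 3 : ℝ) + 1)) * (F12 2 (k + 3) z / F32 2 (k + 3) z)) := by
  obtain ⟨t, ht, hzt⟩ := exists_t hz hz1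
  rw [F12_sum _ _ (by omega), F32_sum _ _ (by omega)]
  simp only [Finset.sum_range_succ, Finset.sum_range_zero, cast_descFactorial_succ,
    Nat.descFactorial_zero, Nat.factorial]
  push_cast
  have hk : (0 : ℝ) ≤ k := Nat.cast_nonneg k
  generalize (k : ℝ) = k at *
  have h1 : 0 < 1 + t := by linarith
  refine pos_of_homogenized
    (f := (1 + t) ^ 2 + 4 * (k + 3) * t * (1 + t) + 4 / 3 * (k + 3) * (k + 2) * t ^ 2)
    (g := (1 + t) ^ 2 + 4 / 3 * (k + 3) * t * (1 + t) + 4 / 15 * (k + 3) * (k + 2) * t ^ 2)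
    ht hzt (by positivity) ?_ ?_
  · have e1 : k + 3 - 1 = k + 2 := by ring
    simp only [zero_add, sub_zero, e1]
    rw [hzt, div_eq_div_iff (by positivity) (by positivity)]
    field_simp
    ring
  -- `c₀, …, c₃` are the coefficients of `1, t, t², t³`; `τ` is near the minimum of the cubic
  · have hc := cubic_pos (c₀ := 24 + 8 * k) (c₁ := -123 - 214 / 3 * k - 32 / 3 * k ^ 2)
      (c₂ := -100 + 1792 / 15 * k + 784 / 9 * k ^ 2 + 64 / 5 * k ^ 3)
      (c₃ := 5982 / 5 + 4892 / 3 * k + 32872 / 45 * k ^ 2 + 400 / 3 * k ^ 3 + 128 / 15 * k ^ 4)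
      (t := t) (3 / 5 / (k + 3)) (by positivity) (by positivity) ht.le ?_
    · refine lt_of_lt_of_le hc (sub_nonneg.mp ?_)
      ring_nf
      positivity
    · rw [← mul_pos_iff_of_pos_left (show 0 < (k + 3) ^ 4 by positivity)]
      field_simp
      ring_nf
      positivity

lemma small_three (k : ℕ) {z : ℝ} (hz : 0 < z) (hz1 : z < 1) :
    0 < (1 - z) * (7 * (2 * (k + 3 : ℝ) + 1) * (F12 3 (k + 3) z / F32 3 (k + 3) z) ^ 2 -
        (7 + (2 * (k + 3 : ℝ) + 1)) * (F12 3 (k + 3) z / F32 3 (k + 3) z) + 1) -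
      z * (7 * (2 * (k + 3 : ℝ) + 1)) * (7 * (2 * (k + 3 : ℝ) + 1) + 2 -
        (7 + (2 * (k + 3 : ℝ) + 1)) * (F12 3 (k + 3) z / F32 3 (k + 3) z)) := by
  obtain ⟨t, ht, hzt⟩ := exists_t hz hz1
  rw [F12_sum _ _ (by omega), F32_sum _ _ (by omega)]
  simp only [Finset.sum_range_succ, Finset.sum_range_zero, cast_descFactorial_succ,
    Nat.descFactorial_zero, Nat.factorial]
  push_cast
  have hk : (0 : ℝ) ≤ k := Nat.cast_nonneg k
  generalize (k : ℝ) = k at *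
  have h1 : 0 < 1 + t := by linarith
  refine pos_of_homogenized
    (f := (1 + t) ^ 3 + 6 * (k + 3) * t * (1 + t) ^ 2 +
      4 * (k + 3) * (k + 2) * t ^ 2 * (1 + t) + 8 / 15 * (k + 3) * (k + 2) * (k + 1) * t ^ 3)
    (g := (1 + t) ^ 3 + 2 * (k + 3) * t * (1 + t) ^ 2 +
      4 / 5 * (k + 3) * (k + 2) * t ^ 2 * (1 + t) + 8 / 105 * (k + 3) * (k + 2) * (k + 1) * t ^ 3)
    ht hzt (by positivity) ?_ ?_
  · have e1 : k + 3 - 1 = k + 2 := by ring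
    have e2 : k + 3 - 2 = k + 1 := by ring
    simp only [zero_add, sub_zero, e1, e2]
    have e3 : (3 : ℝ) - 2 = 1 := by norm_num
    have e4 : (3 : ℝ) - 1 = 2 := by norm_num
    simp only [e3, e4]
    rw [hzt, div_eq_div_iff (by positivity) (by positivity)]
    field_simp
    ring
  -- `c₀, …, c₃` are the coefficients of `1, t, t², t³`; `τ` is near the minimum of the cubic
  · have hc := cubic_pos (c₀ := 36 + 12 * k) (c₁ := -157 - 98 * k - 16 * k ^ 2)
      (c₂ := -1518 / 5 + 692 / 5 * k + 712 / 5 * k ^ 2 + 112 / 5 * k ^ 3)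
      (c₃ := 177111 / 35 + 230266 / 35 * k + 100708 / 35 * k ^ 2 + 18136 / 35 * k ^ 3 +
        1152 / 35 * k ^ 4)
      (t := t) (9 / 20 / (k + 3)) (by positivity) (by positivity) ht.le ?_
    · refine lt_of_lt_of_le hc (sub_nonneg.mp ?_)
      ring_nf
      positivity
    · rw [← mul_pos_iff_of_pos_left (show 0 < (k + 3) ^ 4 by positivity)]
      field_simp
      ring_nf
      positivity

/-- Inequality (2.13): for `(m₂, m₃) ∈ S` and `0 < z < 1`, the stronger
inequality implying the GPI holds. -/
theorem stmt_7 (m2 m3 : ℕ)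
    (hS : (m2 = 1 ∧ 5 ≤ m3) ∨ (m2 = 2 ∧ 3 ≤ m3) ∨ (3 ≤ m2 ∧ m2 ≤ m3))
    (z : ℝ) (hz1 : 0 < z) (hz2 : z < 1) :
    z < (F12 m2 m3 z * (1 - z) / ((2 * (m3 : ℝ) + 1) * F32 m2 m3 z) +
          (((2 * (m2 : ℝ) + 1) * (2 * (m3 : ℝ) + 1) + 1) * z - 1) /
            ((2 * (m2 : ℝ) + 1) * (2 * (m3 : ℝ) + 1))) *
        (F12 m2 m3 z * (1 - z) / ((2 * (m2 : ℝ) + 1) * F32 m2 m3 z) +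
          (((2 * (m2 : ℝ) + 1) * (2 * (m3 : ℝ) + 1) + 1) * z - 1) /
            ((2 * (m2 : ℝ) + 1) * (2 * (m3 : ℝ) + 1))) := by
  have hg : 0 < F32 m2 m3 z := by
    have := eval_ge_coeff_zero (gPoly_coeff_nonneg m2 m3) hz1.le
    rw [gPoly_coeff_zero] at this
    rw [F32_eq]
    linarith
  refine claim_of_pos (by positivity) (by positivity) hg hz2 ?_
  rcases hS with ⟨rfl, h⟩ | ⟨rfl, h⟩ | ⟨h, h'⟩
  · obtain ⟨k, rfl⟩ := Nat.exists_eq_add_of_le' h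
    have := small_one k hz1 hz2
    push_cast
    norm_num at this ⊢
    exact this
  · obtain ⟨k, rfl⟩ := Nat.exists_eq_add_of_le' h
    have := small_two k hz1 hz2
    push_cast
    norm_num at this ⊢
    exact this
  · rcases h.eq_or_lt with rfl | h4
    · obtain ⟨k, rfl⟩ := Nat.exists_eq_add_of_le' h'
      have := small_three k hz1 hz2
      push_cast
      norm_num at this ⊢
      exact this
    · exact barrier_pos m2 m3 h4 (le_trans h4 h') hz1 hz2
end

section
/- Let m2, m3 be positive integers and let z be a real number with 1/r² < z < 1/r. Then H(z) ≥ 1 if and only if z ≤ t. -/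
/-!
Put `P = (2m₂+1)(2m₃+1)`, `r = P + 1`, `s = m₂+m₃+1`, `d = m₃-m₂`, `u = 1 - rz > 0` and
`D = r²z - 1 > 0`. As `D + su > 0`, the inequality `H(z) ≥ 1` can be squared to
`(D + su)² ≤ d²u² + P³z`. Since `s² - d² = P` and `P²z - u² = D(1 - z)`, the difference of the two
sides is `D` times a function that is affine in `z`:
`d²u² + P³z - (D + su)² = D (4m₂m₃ - z (4m₂m₃ r + P))`.
Finally `t = 4m₂m₃ / (4m₂m₃ r + P)`.
-/

/-- For positive integers `m₂, m₃` and `1/r² < z < 1/r`, `H(z) ≥ 1` iff `z ≤ t`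
(the equivalence chain on page 10). -/
theorem stmt_9 (m2 m3 : ℕ) (hm2 : 0 < m2) (hm3 : 0 < m3) (z : ℝ) :
    let r : ℝ := (2 * m2 + 1) * (2 * m3 + 1) + 1
    let t : ℝ := 1 / (r + (1 + 1 / (2 * m2)) * (1 + 1 / (2 * m3)))
    let H : ℝ → ℝ := fun w =>
      (((m2 : ℝ) + m3 + 1) * (r * w - 1) +
        Real.sqrt ((((m3 : ℝ) - m2) * (r * w - 1)) ^ 2 +
          (2 * (m2 : ℝ) + 1) ^ 3 * (2 * (m3 : ℝ) + 1) ^ 3 * w)) / (r ^ 2 * w - 1)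
    1 / r ^ 2 < z → z < 1 / r →
      (H z ≥ 1 ↔ z ≤ t) := by
  intro r t H h1 h2
  have hx : (0 : ℝ) < m2 := by exact_mod_cast hm2
  have hy : (0 : ℝ) < m3 := by exact_mod_cast hm3
  have hr : r = (2 * m2 + 1) * (2 * m3 + 1) + 1 := rfl
  have hr0 : 0 < r := by rw [hr]; positivity
  have hD : 0 < r ^ 2 * z - 1 := by
    rw [div_lt_iff₀ (by positivity)] at h1
    linarith
  have hu : 0 < 1 - r * z := by
    rw [lt_div_iff₀ hr0] at h2
    linarith
  have ht : t = 4 * m2 * m3 / (4 * m2 * m3 * r + (2 * m2 + 1) * (2 * m3 + 1)) := by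
    simp only [t]
    field_simp
    ring
  have hsu : 0 < (r ^ 2 * z - 1) + ((m2 : ℝ) + m3 + 1) * (1 - r * z) := by positivity
  have key : (((m3 : ℝ) - m2) * (r * z - 1)) ^ 2 +
        (2 * (m2 : ℝ) + 1) ^ 3 * (2 * (m3 : ℝ) + 1) ^ 3 * z -
        ((r ^ 2 * z - 1) + ((m2 : ℝ) + m3 + 1) * (1 - r * z)) ^ 2 =
      (r ^ 2 * z - 1) *
        (4 * m2 * m3 - z * (4 * m2 * m3 * r + (2 * m2 + 1) * (2 * m3 + 1))) := by
    rw [hr]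
    ring
  have hH : H z ≥ 1 ↔ (r ^ 2 * z - 1) + ((m2 : ℝ) + m3 + 1) * (1 - r * z) ≤
      Real.sqrt ((((m3 : ℝ) - m2) * (r * z - 1)) ^ 2 +
        (2 * (m2 : ℝ) + 1) ^ 3 * (2 * (m3 : ℝ) + 1) ^ 3 * z) := by
    simp only [H, ge_iff_le]
    rw [le_div_iff₀ hD]
    constructor <;> intro h <;> linarith
  rw [hH, Real.le_sqrt' hsu, ← sub_nonneg, key, mul_nonneg_iff_of_pos_left hD, sub_nonneg, ht,
    le_div_iff₀ (by positivity)]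
end

section
/- Let m2, m3 be positive integers. Then H(z) > 1/2 for every z with 1/r² < z ≤ 1/r, and H(z) > 1/7 for every z with 1/r < z ≤ 2.75/(m2·m3). -/
/-!
Put `P = (2m₂+1)(2m₃+1)`, `r = P + 1`, `s = m₂+m₃+1`, `u = rz - 1`, `D = r²z - 1 = P + ru`.
For `k > 0` the inequality `H(z) > 1/k` follows from `(D/k - su)² < (m₃-m₂)²u² + P³z`. Since
`s² - (m₃-m₂)² = P`, the difference of the two sides factors as `D·G / (k²r²)`, where, with
`v = ru`,
`G = k²P(P² + P - v) + 2ksrv - (P + v)r²`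
is affine in `v` (`lt_quotient_of_affine_pos`). It remains to see that `G > 0`: for `k = 2` on
`-P < v ≤ 0` by looking at the two endpoints, and for `k = 7` from `v ≤ (53/2)r`, which is a
consequence of `z ≤ 2.75/(m₂m₃)`, since the coefficient of `v` in `G` is at least `-r²` as soon as
`s ≥ 4`; the case `m₂ = m₃ = 1` is checked numerically.
-/

/-- The reduction of `H(z) > 1/k` to positivity of an expression affine in `v = r(rz - 1)`. -/
lemma lt_quotient_of_affine_pos (A B P r k z : ℝ) (hk : 0 < k)
    (hP : P = (2 * A + 1) * (2 * B + 1)) (hr : r = P + 1) (hr0 : 0 < r)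
    (hD : 0 < r ^ 2 * z - 1)
    (hG : 0 < k ^ 2 * P * (P ^ 2 + P - r * (r * z - 1))
      + 2 * k * (A + B + 1) * r * (r * (r * z - 1)) - (P + r * (r * z - 1)) * r ^ 2) :
    1 / k < ((A + B + 1) * (r * z - 1) + Real.sqrt (((B - A) * (r * z - 1)) ^ 2 +
      (2 * A + 1) ^ 3 * (2 * B + 1) ^ 3 * z)) / (r ^ 2 * z - 1) := by
  rw [lt_div_iff₀ hD]
  have key : (1 / k * (r ^ 2 * z - 1) - (A + B + 1) * (r * z - 1)) ^ 2 <
      ((B - A) * (r * z - 1)) ^ 2 + (2 * A + 1) ^ 3 * (2 * B + 1) ^ 3 * z := by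
    have e : ((B - A) * (r * z - 1)) ^ 2 + (2 * A + 1) ^ 3 * (2 * B + 1) ^ 3 * z
        - (1 / k * (r ^ 2 * z - 1) - (A + B + 1) * (r * z - 1)) ^ 2
        = (r ^ 2 * z - 1) * (k ^ 2 * P * (P ^ 2 + P - r * (r * z - 1))
      + 2 * k * (A + B + 1) * r * (r * (r * z - 1)) - (P + r * (r * z - 1)) * r ^ 2)
        / (k ^ 2 * r ^ 2) := by
      rw [eq_div_iff (by positivity)]
      field_simp
      subst hr
      subst hP
      ring
    have := div_pos (mul_pos hD hG) (by positivity : 0 < k ^ 2 * r ^ 2)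
    linarith
  have := Real.lt_sqrt_of_sq_lt key
  linarith

/-- Lemma 4.1: for positive integers `m₂, m₃`, `H(z) > 1/2` for
`1/r² < z ≤ 1/r`, and `H(z) > 1/7` for `1/r < z ≤ 2.75/(m₂ m₃)`. -/
theorem stmt_10 (m2 m3 : ℕ) (hm2 : 0 < m2) (hm3 : 0 < m3) :
    let r : ℝ := (2 * m2 + 1) * (2 * m3 + 1) + 1
    let H : ℝ → ℝ := fun w =>
      (((m2 : ℝ) + m3 + 1) * (r * w - 1) +
        Real.sqrt ((((m3 : ℝ) - m2) * (r * w - 1)) ^ 2 +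
          (2 * (m2 : ℝ) + 1) ^ 3 * (2 * (m3 : ℝ) + 1) ^ 3 * w)) / (r ^ 2 * w - 1)
    (∀ z : ℝ, 1 / r ^ 2 < z → z ≤ 1 / r → H z > 1 / 2) ∧
    (∀ z : ℝ, 1 / r < z → z ≤ 2.75 / ((m2 : ℝ) * m3) → H z > 1 / 7) := by
  intro r H
  have hA : (1 : ℝ) ≤ m2 := by exact_mod_cast hm2
  have hB : (1 : ℝ) ≤ m3 := by exact_mod_cast hm3
  have hcase : (m2 = 1 ∧ m3 = 1) ∨ (3 : ℝ) ≤ m2 + m3 := by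
    by_cases h : 3 ≤ m2 + m3
    · right; exact_mod_cast h
    · left; omega
  have hAB : (1 : ℝ) ≤ m2 * m3 := by nlinarith
  have hAB' : (m2 : ℝ) + m3 ≤ m2 * m3 + 1 := by nlinarith
  obtain ⟨P, hP⟩ : ∃ P : ℝ, P = (2 * m2 + 1) * (2 * m3 + 1) := ⟨_, rfl⟩
  have hr : r = P + 1 := by rw [hP]
  have hP9 : 9 ≤ P := by rw [hP]; nlinarith
  have hr0 : 0 < r := by linarith
  have hs : 2 * ((m2 : ℝ) + m3 + 1) ≤ P := by rw [hP]; nlinarith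
  have hr4 : r ≤ 10 * (m2 * m3) := by rw [hr, hP]; nlinarith
  constructor
  · intro z h1 h2
    rw [div_lt_iff₀ (by positivity)] at h1
    rw [le_div_iff₀ hr0] at h2
    refine lt_quotient_of_affine_pos m2 m3 P r 2 z (by norm_num) hP hr hr0 (by linarith) ?_
    obtain ⟨y, hy⟩ : ∃ y, y = - (r * (r * z - 1)) := ⟨_, rfl⟩
    have hy0 : 0 ≤ y := by rw [hy]; nlinarith
    have hyP : y < P := by rw [hy]; nlinarith
    have e : r * (r * z - 1) = -y := by linarith
    rw [e]
    generalize (m2 : ℝ) + m3 + 1 = s at *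
    -- `P·G` is the combination of the values of `G` at `v = 0` and `v = -P` with weights
    -- `P - y` and `y`.
    have g0 : 0 < 4 * P * (P ^ 2 + P) - P * r ^ 2 := by
      have : 4 * P * (P ^ 2 + P) - P * r ^ 2 = P * r * (3 * P - 1) := by rw [hr]; ring
      rw [this]
      have : 0 < 3 * P - 1 := by linarith
      positivity
    have g1 : 0 < 4 * P * (P ^ 2 + 2 * P) - 4 * s * r * P := by
      have h3 : s * r ≤ P / 2 * r := mul_le_mul_of_nonneg_right (by linarith) hr0.le
      have h4 : 0 < P ^ 2 + 2 * P - P / 2 * r := by rw [hr]; nlinarith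
      have := mul_pos (by linarith : 0 < 4 * P) (by linarith : 0 < P ^ 2 + 2 * P - s * r)
      linarith
    have h5 := mul_pos (sub_pos.2 hyP) g0
    have h6 := mul_nonneg hy0 g1.le
    refine (mul_pos_iff_of_pos_left (by linarith : 0 < P)).1 ?_
    linarith
  · intro z h1 h2
    rw [div_lt_iff₀ hr0] at h1
    rw [le_div_iff₀ (by positivity)] at h2
    have hz : 0 < z := by nlinarith
    have h3 : r * z ≤ 27.5 := by nlinarith
    refine lt_quotient_of_affine_pos m2 m3 P r 7 z (by norm_num) hP hr hr0 (by nlinarith) ?_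
    obtain ⟨u, hu⟩ : ∃ u, u = r * z - 1 := ⟨_, rfl⟩
    rw [← hu]
    have hu0 : 0 < u := by linarith
    have hu1 : u ≤ 26.5 := by linarith
    rcases hcase with ⟨rfl, rfl⟩ | h
    · have hP' : P = 9 := by rw [hP]; norm_num
      have hr' : r = 10 := by rw [hr, hP']; norm_num
      rw [hr', hP']
      norm_num
      linarith
    · have hs4 : 4 ≤ (m2 : ℝ) + m3 + 1 := by linarith
      generalize (m2 : ℝ) + m3 + 1 = s at *
      have h4 : 0 ≤ (s - 4) * (r * (r * u)) := by
        have : 0 ≤ s - 4 := by linarith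
        positivity
      have h5 : r * r ^ 2 * u ≤ r * r ^ 2 * 26.5 := by gcongr
      have h6 : 0 < 49 * P ^ 2 - P * r - 26.5 * r ^ 2 := by rw [hr]; nlinarith
      have h7 := mul_pos hr0 h6
      have h8 : 0 ≤ (56 * r - 49 * P) * (r * u) := by
        have : 0 ≤ 56 * r - 49 * P := by linarith
        positivity
      have h9 : P * (P ^ 2 + P) = P ^ 2 * r := by rw [hr]; ring
      nlinarith
end

section
/- Let (m2, m3) ∈ S with 1 ≤ m2 ≤ 7, let r = (2m2+1)(2m3+1)+1, and let 0 < z < 1. Write P1 = F(−m2,−m3;1/2;z) and P2 = F(−m2,−m3;3/2;z). Then S_{m2,m3}(z) := (2m2+1)(2m3+1)(1−z) P1² + 2(m2+m3+1)(r z − 1) P1 P2 − (r² z − 1) P2² > 0. -/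
/-- For `j ≤ m ≤ n`, a generic term of either hypergeometric polynomial, with the quotients of
factorials rewritten as falling factorials; that of `n` is a polynomial in `n`. -/
theorem term_eq {m n j : ℕ} (hjm : j ≤ m) (h : m ≤ n) (z : ℝ) (k : ℕ) :
    (m.factorial : ℝ) * (n.factorial : ℝ) *
        ((4 : ℝ) ^ j * z ^ j /
          (((m - j).factorial : ℝ) * ((n - j).factorial : ℝ) * (k.factorial : ℝ))) =
      (m.descFactorial j : ℝ) * (∏ i ∈ Finset.range j, ((n : ℝ) - i)) * 4 ^ j /
        (k.factorial : ℝ) * z ^ j := by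
  have h1 : ((m - j).factorial : ℝ) * (m.descFactorial j : ℝ) = m.factorial := by
    exact_mod_cast Nat.factorial_mul_descFactorial hjm
  have h2 : ((n - j).factorial : ℝ) * (n.descFactorial j : ℝ) = n.factorial := by
    exact_mod_cast Nat.factorial_mul_descFactorial (hjm.trans h)
  have h3 : (n.descFactorial j : ℝ) = ∏ i ∈ Finset.range j, ((n : ℝ) - i) := by
    rw [Nat.descFactorial_eq_prod_range, Nat.cast_prod]
    refine Finset.prod_congr rfl fun i hi => ?_
    have : i < j := by simpa using hi
    rw [Nat.cast_sub (by omega)]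
  rw [← h3, ← h1, ← h2]
  have := Nat.factorial_pos (m - j)
  have := Nat.factorial_pos (n - j)
  have := Nat.factorial_pos k
  field_simp

theorem F12_eq_s11 (m n : ℕ) (h : m ≤ n) (z : ℝ) :
    F12 m n z = ∑ j ∈ Finset.range (m + 1),
      (m.descFactorial j : ℝ) * (∏ i ∈ Finset.range j, ((n : ℝ) - i)) * 4 ^ j /
        ((2 * j).factorial : ℝ) * z ^ j := by
  rw [F12, min_eq_left h, Finset.mul_sum]
  exact Finset.sum_congr rfl fun j hj => term_eq (by simpa [Nat.lt_succ_iff] using hj) h z _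

theorem F32_eq_s11 (m n : ℕ) (h : m ≤ n) (z : ℝ) :
    F32 m n z = ∑ j ∈ Finset.range (m + 1),
      (m.descFactorial j : ℝ) * (∏ i ∈ Finset.range j, ((n : ℝ) - i)) * 4 ^ j /
        ((2 * j + 1).factorial : ℝ) * z ^ j := by
  rw [F32, min_eq_left h, Finset.mul_sum]
  exact Finset.sum_congr rfl fun j hj => term_eq (by simpa [Nat.lt_succ_iff] using hj) h z _

/-- The quadratic form in `(p, q)` whose value at `p = F(-m, -n; 1/2; z)`,
`q = F(-m, -n; 3/2; z)` is `S_{m,n}(z)`. -/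
noncomputable def Sform (m n z p q : ℝ) : ℝ :=
  (2 * m + 1) * (2 * n + 1) * (1 - z) * p ^ 2 +
    2 * (m + n + 1) * (((2 * m + 1) * (2 * n + 1) + 1) * z - 1) * p * q -
    (((2 * m + 1) * (2 * n + 1) + 1) ^ 2 * z - 1) * q ^ 2

/-- The coefficient of `z` in `S_{m,n}(z)`. It is written in terms of the coefficient
`2 m n / 3` of `z` in `F(-m, -n; 3/2; z)`. -/
noncomputable def lin (m n : ℝ) : ℝ :=
  2 * (2 * m * n / 3) * (3 * ((2 * m + 1) * (2 * n + 1)) - 4 * (m + n + 1) + 1) -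
    ((2 * m + 1) * (2 * n + 1) - 2 * (m + n + 1) * ((2 * m + 1) * (2 * n + 1) + 1) +
      ((2 * m + 1) * (2 * n + 1) + 1) ^ 2)

/-- The coefficient of `z ^ 2` in `S_{m,n}(z)`. It is written in terms of the coefficients
`2 m n / 3` and `2 m (m - 1) n (n - 1) / 15` of `z` and `z ^ 2` in `F(-m, -n; 3/2; z)`. -/
noncomputable def quad (m n : ℝ) : ℝ :=
  2 * (2 * m * (m - 1) * n * (n - 1) / 15) *
      (5 * ((2 * m + 1) * (2 * n + 1)) - 6 * (m + n + 1) + 1) +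
    (2 * m * n / 3) ^ 2 * (9 * ((2 * m + 1) * (2 * n + 1)) - 6 * (m + n + 1) + 1) -
    2 * (2 * m * n / 3) * (3 * ((2 * m + 1) * (2 * n + 1)) -
      4 * (m + n + 1) * ((2 * m + 1) * (2 * n + 1) + 1) + ((2 * m + 1) * (2 * n + 1) + 1) ^ 2)

/-- The coefficient of `z ^ (2 m + 1)` in `S_{m,n}(z)` is `-topCoeff m n * a ^ 2`, with `a` the
leading coefficient of `F(-m, -n; 3/2; z)`. -/
noncomputable def topCoeff (m n : ℝ) : ℝ :=
  (2 * m + 1) * (2 * n + 1) * (2 * m + 1) ^ 2 -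
    2 * (m + n + 1) * ((2 * m + 1) * (2 * n + 1) + 1) * (2 * m + 1) +
    ((2 * m + 1) * (2 * n + 1) + 1) ^ 2

theorem quadratic_pos {c₀ c₁ c₂ : ℝ} (h₀ : 0 < c₀) (hd : 0 < 4 * c₀ * c₂ - c₁ ^ 2) (z : ℝ) :
    0 < c₀ + c₁ * z + c₂ * z ^ 2 := by
  have h : 4 * c₀ * (c₀ + c₁ * z + c₂ * z ^ 2) =
      (2 * c₀ + c₁ * z) ^ 2 + (4 * c₀ * c₂ - c₁ ^ 2) * z ^ 2 := by ring
  by_cases hz : z = 0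
  · simpa [hz] using h₀
  · have h2 : 0 < 4 * c₀ * (c₀ + c₁ * z + c₂ * z ^ 2) := by rw [h]; positivity
    exact pos_of_mul_pos_right h2 (by positivity)

/-- Positivity of the form follows once the part of degree at most two has negative discriminant
and the remainder, after splitting off a multiple of `z ^ k * (1 - z)`, is nonnegative. -/
theorem Sform_pos_of_rest {m n z p q : ℝ} (a : ℝ) (k : ℕ) (hz : 0 < z) (hz1 : z < 1)
    (hm : 0 < m) (hn : 0 < n)
    (hd : 0 < 4 * (4 * m * n) * quad m n - lin m n ^ 2)
    (ht : 0 ≤ topCoeff m n)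
    (hr : 0 ≤ Sform m n z p q - (4 * m * n + lin m n * z + quad m n * z ^ 2)
      - topCoeff m n * a ^ 2 * z ^ k * (1 - z)) : 0 < Sform m n z p q := by
  have h1 := quadratic_pos (by positivity : 0 < 4 * m * n) hd z
  have h2 : 0 ≤ topCoeff m n * a ^ 2 * z ^ k * (1 - z) := by
    have : 0 ≤ 1 - z := by linarith
    positivity
  linarith

theorem Sform_pos_one (n : ℕ) (hn : 5 ≤ n) (z : ℝ) (hz : 0 < z) (hz1 : z < 1) :
    0 < Sform (1 : ℕ) n z (F12 1 n z) (F32 1 n z) := by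
  rw [F12_eq_s11 1 n (by omega), F32_eq_s11 1 n (by omega)]
  obtain ⟨t, rfl⟩ := Nat.exists_eq_add_of_le hn
  push_cast
  have ht : (0 : ℝ) ≤ t := t.cast_nonneg
  generalize (t : ℝ) = t at ht
  have hc : 0 < 4 * 1 * (5 + t) := by positivity
  have hd : 0 < 4 * (4 * 1 * (5 + t)) * (4 * 1 * (5 + t) + lin 1 (5 + t) + quad 1 (5 + t))
      - (4 * 1 * (5 + t) + lin 1 (5 + t)) ^ 2 := by
    unfold quad lin
    ring_nf
    positivity
  have h1 := mul_pos (sub_pos.2 hz1) (quadratic_pos hc hd z)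
  have h2 : 0 ≤ Sform 1 (5 + t) 1 (1 + 2 * (5 + t)) (1 + 2 * (5 + t) / 3) * z ^ 3 := by
    refine mul_nonneg ?_ (by positivity)
    unfold Sform
    ring_nf
    positivity
  refine lt_of_lt_of_eq (add_pos_of_pos_of_nonneg h1 h2) ?_
  simp only [Sform, quad, lin, Finset.sum_range_succ, Finset.prod_range_succ,
    Finset.sum_range_zero, Finset.prod_range_zero, Nat.descFactorial, Nat.factorial]
  push_cast
  ring

theorem Sform_pos_of_two_le (m n : ℕ) (hm : 2 ≤ m) (hm7 : m ≤ 7) (hmn : max m 3 ≤ n) (z : ℝ)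
    (hz : 0 < z) (hz1 : z < 1) :
    0 < Sform m n z (F12 m n z) (F32 m n z) := by
  have hle : m ≤ n := (le_max_left _ _).trans hmn
  rw [F12_eq_s11 m n hle, F32_eq_s11 m n hle]
  -- `a` is the leading coefficient of `F(-m, -n; 3/2; z)`.
  refine Sform_pos_of_rest
    (m.descFactorial m * (∏ i ∈ Finset.range m, ((n : ℝ) - i)) * 4 ^ m / (2 * m + 1).factorial)
    (2 * m) hz hz1 (by positivity) (Nat.cast_pos.2 (by omega)) ?_ ?_ ?_
  all_goals
    obtain ⟨t, rfl⟩ := Nat.exists_eq_add_of_le hmn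
    clear hle hmn
    have ht : (0 : ℝ) ≤ t := t.cast_nonneg
    rw [Nat.cast_add]
    generalize (t : ℝ) = t at ht
    -- After expansion every monomial in `t` and `z` has a nonnegative coefficient.
    interval_cases m <;>
    · simp only [max_eq_left, max_eq_right, Nat.reduceLeDiff, le_refl]
      simp only [Sform, quad, lin, topCoeff, Finset.sum_range_succ, Finset.prod_range_succ,
        Finset.sum_range_zero, Finset.prod_range_zero, Nat.descFactorial, Nat.factorial]
      push_cast
      ring_nf
      positivity

/-- Positivity of `S_{m₂,m₃}(z)` (Section 3): for `(m₂, m₃) ∈ S` with `1 ≤ m₂ ≤ 7`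
and `0 < z < 1`,
`(2m₂+1)(2m₃+1)(1−z) P₁² + 2(m₂+m₃+1)(rz−1) P₁P₂ − (r²z−1) P₂² > 0`, where
`P₁ = F(−m₂,−m₃;1/2;z)`, `P₂ = F(−m₂,−m₃;3/2;z)` and `r = (2m₂+1)(2m₃+1)+1`. -/
theorem stmt_11 (m2 m3 : ℕ)
    (hS : (m2 = 1 ∧ 5 ≤ m3) ∨ (m2 = 2 ∧ 3 ≤ m3) ∨ (3 ≤ m2 ∧ m2 ≤ m3))
    (hm7 : m2 ≤ 7) (z : ℝ) (hz1 : 0 < z) (hz2 : z < 1) :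
    let r : ℝ := (2 * m2 + 1) * (2 * m3 + 1) + 1
    (2 * (m2 : ℝ) + 1) * (2 * (m3 : ℝ) + 1) * (1 - z) * (F12 m2 m3 z) ^ 2 +
      2 * ((m2 : ℝ) + m3 + 1) * (r * z - 1) * F12 m2 m3 z * F32 m2 m3 z -
      (r ^ 2 * z - 1) * (F32 m2 m3 z) ^ 2 > 0 := by
  intro r
  rcases hS with ⟨rfl, h⟩ | ⟨rfl, h⟩ | ⟨h, h'⟩
  · exact Sform_pos_one m3 h z hz1 hz2
  · exact Sform_pos_of_two_le 2 m3 le_rfl hm7 (by omega) z hz1 hz2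
  · exact Sform_pos_of_two_le m2 m3 (by omega) hm7 (by omega) z hz1 hz2
end

section
/- Let x2, x3, u be real numbers with x3 ≥ x2 ≥ 8 and 0 < u < 2.75. Define A = 17!·(x2 x3)³ + Σ_{j=1}^{4} 17!·4^j u^j (x2 x3)^{4−j} · (∏_{i=1}^{j−1} (x2−i)(x3−i)) / (2j)! and B = 17!·(x2 x3)³ + Σ_{j=1}^{4} 17!·4^j u^j (x2 x3)^{4−j} · (∏_{i=1}^{j−1} (x2−i)(x3−i)) / (2j+1)! (empty products equal 1). Then (2x2+1)(2x3+1)(x2 x3 − u) A² + 2(x2+x3+1)( ((2x2+1)(2x3+1)+1) u − x2 x3 ) A B − ( ((2x2+1)(2x3+1)+1)² u − x2 x3 ) B² > 0. -/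
/-!
Put `α = 1 / x2`, `β = 1 / x3`, `s = α + β`, `p = α β`, so that `0 ≤ s ≤ 1 / 4` and
`0 ≤ p ≤ s / 16`. Dividing `A` and `B` by `17! (x2 x3) ^ 3` and the whole expression by
`(17!) ^ 2 (x2 x3) ^ 8` leaves a polynomial in `s`, `p`, `u`, of degree 9 in `u`, of the form
`Q0 (a², a b, b²) + u Q1 (a², a b, b²)` with `Q0`, `Q1` linear (lemma `normalized_pos`).

The coefficients of `u ^ k` can be bounded below one at a time. The constant coefficient is `4`. For
`1 ≤ k ≤ 4` the coefficient vanishes at `s = p = 0` and is at least a constant times `s`. For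
`5 ≤ k ≤ 9` it is at least its (negative) value at `s = p = 0`: after splitting off a product
of the factors `w_i = (1 - i α) (1 - i β) ∈ [0, 1]`, the cofactor is a polynomial of low degree
whose term linear in `s` dominates the remaining negative terms. What is left is an elementary
inequality in `u`, linear in `s`; at `s = 0` it fails slightly above `u = 2.75`.
-/

/-- The part of the normalized quadratic form without the explicit factor `u`, linear in
`(P, R, S) = (a², a b, b²)`. Here `4 + 2 s + p` is `(2 + α) (2 + β)`. -/
def Q0 (s p P R S : ℝ) : ℝ :=
  (4 + 2 * s + p) * P - 2 * (s + p) * R + p * S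

/-- The part of the normalized quadratic form multiplied by `u`, linear in
`(P, R, S) = (a², a b, b²)`. -/
def Q1 (s p P R S : ℝ) : ℝ :=
  -((4 + 2 * s + p) * p * P) + 2 * (s + p) * (4 + 2 * s + 2 * p) * R
    - (4 + 2 * s + 2 * p) ^ 2 * S

/-- The inequality left over after bounding every coefficient. -/
lemma final_bound (s u : ℝ) (hs0 : 0 ≤ s) (hs1 : s ≤ 1 / 4) (hu1 : 0 < u) (hu2 : u < 2.75) :
    0 < 4 + -(153 / 25) * s * u + 51 / 100 * s * u ^ 2 + 4 / 5 * s * u ^ 3 + 6 / 25 * s * u ^ 4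
      - 32 / 14175 * u ^ 5 - 32 / 8505 * u ^ 6 - 64 / 59535 * u ^ 7 - 16 / 127575 * u ^ 8
      - 64 / 8037225 * u ^ 9 := by
  have hpow : ∀ (c : ℝ) (k : ℕ), u ≤ c → u ^ k ≤ c ^ k := fun c k h =>
    pow_le_pow_left₀ hu1.le h k
  rcases le_total u (9 / 4) with h | h
  · -- the part linear in `s` is at least `-(6 * s)`, and the rest at least `2.9`
    have hG : -6 ≤ -(153 / 25) * u + 51 / 100 * u ^ 2 + 4 / 5 * u ^ 3 := by
      nlinarith [mul_nonneg hu1.le (sq_nonneg (u - 7 / 5)), sq_nonneg (u - 7 / 5)]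
    have h4 : 0 ≤ s * u ^ 4 := by positivity
    have hsG := mul_le_mul_of_nonneg_left hG hs0
    have h5 := hpow _ 5 h
    have h6 := hpow _ 6 h
    have h7 := hpow _ 7 h
    have h8 := hpow _ 8 h
    have h9 := hpow _ 9 h
    norm_num at h5 h6 h7 h8 h9
    linarith
  · -- the part linear in `s` is nonnegative
    have hG : 0 ≤ -(153 / 25) + 51 / 100 * u + 4 / 5 * u ^ 2 + 6 / 25 * u ^ 3 := by
      have a2 : (9 / 4 : ℝ) ^ 2 ≤ u ^ 2 := pow_le_pow_left₀ (by norm_num) h 2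
      have a3 : (9 / 4 : ℝ) ^ 3 ≤ u ^ 3 := pow_le_pow_left₀ (by norm_num) h 3
      norm_num at a2 a3
      linarith
    have hsG := mul_nonneg (mul_nonneg hs0 hu1.le) hG
    have h5 := hpow _ 5 hu2.le
    have h6 := hpow _ 6 hu2.le
    have h7 := hpow _ 7 hu2.le
    have h8 := hpow _ 8 hu2.le
    have h9 := hpow _ 9 hu2.le
    norm_num at h5 h6 h7 h8 h9
    linarith

lemma neg_le_scale (φ c d : ℝ) (h0 : 0 ≤ φ) (h1 : φ ≤ 1) (hd : 0 ≤ d) (hc : -d ≤ c) :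
    -d ≤ φ * c := by
  linarith [mul_le_mul_of_nonneg_left hc h0, mul_le_mul_of_nonneg_right h1 hd]

set_option maxHeartbeats 1000000 in
-- one polynomial normalization per coefficient
/-- Positivity of the normalized expression. Here `a` and `b` are the truncated sums with
denominators `(2 j)!` and `(2 j + 1)!`, and `w1`, `w2`, `w3` are `(1 - i α) (1 - i β)`. -/
lemma normalized_pos (s p u w1 w2 w3 a b : ℝ) (hs0 : 0 ≤ s) (hs1 : s ≤ 1 / 4)
    (hp0 : 0 ≤ p) (hp1 : p ≤ s / 16) (hu1 : 0 < u) (hu2 : u < 2.75)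
    (hw1 : w1 = 1 - s + p) (hw2 : w2 = 1 - 2 * s + 4 * p) (hw3 : w3 = 1 - 3 * s + 9 * p)
    (ha : a = 1 + 2 * u + 2 / 3 * u ^ 2 * w1 + 4 / 45 * u ^ 3 * (w1 * w2)
      + 2 / 315 * u ^ 4 * (w1 * w2 * w3))
    (hb : b = 1 + 2 / 3 * u + 2 / 15 * u ^ 2 * w1 + 4 / 315 * u ^ 3 * (w1 * w2)
      + 2 / 2835 * u ^ 4 * (w1 * w2 * w3)) :
    0 < Q0 s p (a ^ 2) (a * b) (b ^ 2) + u * Q1 s p (a ^ 2) (a * b) (b ^ 2) := by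
  have hp2 : p ≤ 1 / 64 := by linarith
  -- `hl`, `hu`, `hp`: a nonconstant monomial in `s`, `p` lies between `0` and a constant times `s`
  have hl : ∀ i j : ℕ, 0 ≤ s ^ i * p ^ j := fun i j => by positivity
  have hu : ∀ i j : ℕ, s ^ (i + 1) * p ^ j ≤ s * ((1 / 4) ^ i * (1 / 64) ^ j) := fun i j => by
    have hi : s ^ i ≤ (1 / 4) ^ i := pow_le_pow_left₀ hs0 hs1 i
    have hj : p ^ j ≤ (1 / 64) ^ j := pow_le_pow_left₀ hp0 hp2 j
    calc s ^ (i + 1) * p ^ j = s * (s ^ i * p ^ j) := by ring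
      _ ≤ s * ((1 / 4) ^ i * (1 / 64) ^ j) := by gcongr
  have hp : ∀ j : ℕ, p ^ (j + 1) ≤ s / 16 * (1 / 64) ^ j := fun j => by
    have hj : p ^ j ≤ (1 / 64) ^ j := pow_le_pow_left₀ hp0 hp2 j
    calc p ^ (j + 1) = p * p ^ j := by ring
      _ ≤ s / 16 * (1 / 64) ^ j := by gcongr
  -- `ck` bounds the coefficient of `u ^ k`, for `5 ≤ k` divided by a product of the `w_i`
  have c1 : -(153 / 25) * s ≤ Q0 s p 4 (8 / 3) (4 / 3) + Q1 s p 1 1 1 := by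
    simp only [Q0, Q1]
    linarith [hp 0, hp 1, hu 0 1]
  have c2 : 51 / 100 * s ≤ Q0 s p (4 / 3 * w1 + 4) (4 / 5 * w1 + 4 / 3) (4 / 15 * w1 + 4 / 9) + Q1
    s p 4 (8 / 3) (4 / 3) := by
    simp only [Q0, Q1, hw1]
    linarith [hp 0, hl 0 2, hl 1 1, hl 2 0]
  have c3 : 4 / 5 * s ≤ Q0 s p (8 / 45 * w1 * w2 + 8 / 3 * w1) (32 / 315 * w1 * w2 + 32 / 45 * w1)
    (8 / 315 * w1 * w2 + 8 / 45 * w1) + Q1 s p (4 / 3 * w1 + 4) (4 / 5 * w1 + 4 / 3) (4 / 15 * w1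
    + 4 / 9) := by
    simp only [Q0, Q1, hw1, hw2]
    linarith [hp 0, hl 0 2, hl 0 3, hl 1 1, hl 1 2, hl 2 0, hu 1 1, hu 2 0]
  have c4 : 6 / 25 * s ≤ Q0 s p (4 / 315 * w1 * w2 * w3 + 16 / 45 * w1 * w2 + 4 / 9 * w1 ^ 2) (4 /
    567 * w1 * w2 * w3 + 16 / 189 * w1 * w2 + 4 / 45 * w1 ^ 2) (4 / 2835 * w1 * w2 * w3 + 16 / 945
    * w1 * w2 + 4 / 225 * w1 ^ 2) + Q1 s p (8 / 45 * w1 * w2 + 8 / 3 * w1) (32 / 315 * w1 * w2 +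
    32 / 45 * w1) (8 / 315 * w1 * w2 + 8 / 45 * w1) := by
    simp only [Q0, Q1, hw1, hw2, hw3]
    linarith [hp 0, hl 0 2, hl 0 3, hl 0 4, hl 1 1, hl 1 2, hl 1 3, hu 1 0, hu 1 1, hu 1 2, hu 2
      0, hu 2 1, hl 4 0]
  have c5 : -(32 / 14175) ≤ Q0 s p (8 / 315 * w2 * w3 + 16 / 135 * w1 * w2) (16 / 2835 * w2 * w3 +
    32 / 1575 * w1 * w2) (8 / 8505 * w2 * w3 + 16 / 4725 * w1 * w2) + Q1 s p (4 / 315 * w2 * w3 +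
    16 / 45 * w2 + 4 / 9 * w1) (4 / 567 * w2 * w3 + 16 / 189 * w2 + 4 / 45 * w1) (4 / 2835 * w2 *
    w3 + 16 / 945 * w2 + 4 / 225 * w1) := by
    simp only [Q0, Q1, hw1, hw2, hw3]
    linarith [hp 0, hp 1, hp 2, hl 0 4, hl 1 1, hl 1 2, hl 1 3, hu 1 0, hu 1 1, hl 2 2, hu 2 0, hu
      2 1, hl 4 0]
  have c6 : -(32 / 8505) ≤ Q0 s p (8 / 945 * w1 * w3 + 16 / 2025 * w1 * w2) (8 / 6075 * w1 * w3 +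
    16 / 14175 * w1 * w2) (8 / 42525 * w1 * w3 + 16 / 99225 * w1 * w2) + Q1 s p (8 / 315 * w3 + 16
    / 135 * w1) (16 / 2835 * w3 + 32 / 1575 * w1) (8 / 8505 * w3 + 16 / 4725 * w1) := by
    simp only [Q0, Q1, hw1, hw2, hw3]
    linarith [hp 0, hp 1, hp 2, hl 1 1, hu 0 2, hu 1 0, hl 2 1, hu 2 0]
  have c7 : -(64 / 59535) ≤ Q0 s p (16 / 14175 * w2 * w3) (128 / 893025 * w2 * w3) (16 / 893025 *
    w2 * w3) + Q1 s p (8 / 945 * w3 + 16 / 2025 * w2) (8 / 6075 * w3 + 16 / 14175 * w2) (8 / 42525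
    * w3 + 16 / 99225 * w2) := by
    simp only [Q0, Q1, hw2, hw3]
    linarith [hp 0, hp 1, hp 2, hl 1 1, hu 0 2, hu 1 0, hl 2 1, hu 2 0]
  have c8 : -(16 / 127575) ≤ Q0 s p (4 / 99225 * w3) (4 / 893025 * w3) (4 / 8037225 * w3) + Q1 s p
    (16 / 14175) (128 / 893025) (16 / 893025) := by
    simp only [Q0, Q1, hw3]
    linarith [hp 0, hp 1, hu 0 1, hl 2 0]
  have c9 : -(64 / 8037225) ≤ Q1 s p (4 / 99225) (4 / 893025) (4 / 8037225) := by
    simp only [Q1]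
    linarith [hp 0, hp 1, hu 0 1, hl 2 0]
  have w1n : 0 ≤ w1 := by linarith
  have w2n : 0 ≤ w2 := by linarith
  have w3n : 0 ≤ w3 := by linarith
  have w1l : w1 ≤ 1 := by linarith
  have w2l : w2 ≤ 1 := by linarith
  have w3l : w3 ≤ 1 := by linarith
  have e5 := neg_le_scale (w1) _ _ (by positivity) w1l (by norm_num) c5
  have e6 := neg_le_scale (w1 * w2) _ _ (by positivity) (mul_le_one₀ w1l w2n w2l) (by norm_num) c6
  have e7 := neg_le_scale (w1 ^ 2 * w2) _ _ (by positivity)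
    (mul_le_one₀ (pow_le_one₀ w1n w1l) w2n w2l) (by norm_num) c7
  have e8 := neg_le_scale (w1 ^ 2 * w2 ^ 2 * w3) _ _ (by positivity)
    (mul_le_one₀ (mul_le_one₀ (pow_le_one₀ w1n w1l) (sq_nonneg _)
    (pow_le_one₀ w2n w2l)) w3n w3l) (by norm_num) c8
  have e9 := neg_le_scale (w1 ^ 2 * w2 ^ 2 * w3 ^ 2) _ _ (by positivity)
    (mul_le_one₀ (mul_le_one₀ (pow_le_one₀ w1n w1l) (sq_nonneg _)
    (pow_le_one₀ w2n w2l)) (sq_nonneg _) (pow_le_one₀ w3n w3l)) (by norm_num) c9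
  have hfin := final_bound s u hs0 hs1 hu1 hu2
  have f1 := mul_le_mul_of_nonneg_right c1 (pow_nonneg hu1.le 1)
  have f2 := mul_le_mul_of_nonneg_right c2 (pow_nonneg hu1.le 2)
  have f3 := mul_le_mul_of_nonneg_right c3 (pow_nonneg hu1.le 3)
  have f4 := mul_le_mul_of_nonneg_right c4 (pow_nonneg hu1.le 4)
  have f5 := mul_le_mul_of_nonneg_right e5 (pow_nonneg hu1.le 5)
  have f6 := mul_le_mul_of_nonneg_right e6 (pow_nonneg hu1.le 6)
  have f7 := mul_le_mul_of_nonneg_right e7 (pow_nonneg hu1.le 7)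
  have f8 := mul_le_mul_of_nonneg_right e8 (pow_nonneg hu1.le 8)
  have f9 := mul_le_mul_of_nonneg_right e9 (pow_nonneg hu1.le 9)
  have hsum : 4 + -(153 / 25) * s * u + 51 / 100 * s * u ^ 2 + 4 / 5 * s * u ^ 3
      + 6 / 25 * s * u ^ 4 - 32 / 14175 * u ^ 5 - 32 / 8505 * u ^ 6 - 64 / 59535 * u ^ 7
      - 16 / 127575 * u ^ 8 - 64 / 8037225 * u ^ 9
      ≤ Q0 s p (a ^ 2) (a * b) (b ^ 2) + u * Q1 s p (a ^ 2) (a * b) (b ^ 2) := by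
    clear hw1 hw2 hw3
    simp only [Q0, Q1, ha, hb] at f1 f2 f3 f4 f5 f6 f7 f8 f9 ⊢
    linear_combination f1 + f2 + f3 + f4 + f5 + f6 + f7 + f8 + f9
  linarith

/-- Inequality (4.5): positivity of the truncated polynomial expression `f(x₂, x₃, u)`
for real `x₃ ≥ x₂ ≥ 8` and `0 < u < 2.75`. -/
theorem stmt_12 (x2 x3 u : ℝ) (h2 : 8 ≤ x2) (h23 : x2 ≤ x3)
    (hu1 : 0 < u) (hu2 : u < 2.75) :
    let A : ℝ := (Nat.factorial 17 : ℝ) * (x2 * x3) ^ 3 +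
      ∑ j ∈ Finset.Icc (1 : ℕ) 4,
        (Nat.factorial 17 : ℝ) * 4 ^ j * u ^ j * (x2 * x3) ^ (4 - j) *
          (∏ i ∈ Finset.Icc (1 : ℕ) (j - 1), ((x2 - (i : ℝ)) * (x3 - (i : ℝ)))) /
            ((2 * j).factorial : ℝ)
    let B : ℝ := (Nat.factorial 17 : ℝ) * (x2 * x3) ^ 3 +
      ∑ j ∈ Finset.Icc (1 : ℕ) 4,
        (Nat.factorial 17 : ℝ) * 4 ^ j * u ^ j * (x2 * x3) ^ (4 - j) *
          (∏ i ∈ Finset.Icc (1 : ℕ) (j - 1), ((x2 - (i : ℝ)) * (x3 - (i : ℝ)))) /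
            ((2 * j + 1).factorial : ℝ)
    (2 * x2 + 1) * (2 * x3 + 1) * (x2 * x3 - u) * A ^ 2 +
      2 * (x2 + x3 + 1) * (((2 * x2 + 1) * (2 * x3 + 1) + 1) * u - x2 * x3) * A * B -
      (((2 * x2 + 1) * (2 * x3 + 1) + 1) ^ 2 * u - x2 * x3) * B ^ 2 > 0 := by
  intro A B
  have hx2 : 0 < x2 := by linarith
  have hx3 : 0 < x3 := by linarith
  obtain ⟨α, hα⟩ : ∃ α, α = 1 / x2 := ⟨_, rfl⟩
  obtain ⟨β, hβ⟩ : ∃ β, β = 1 / x3 := ⟨_, rfl⟩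
  have hα0 : 0 < α := by rw [hα]; positivity
  have hβ0 : 0 < β := by rw [hβ]; positivity
  have hα1 : α ≤ 1 / 8 := by
    rw [hα]; exact one_div_le_one_div_of_le (by norm_num) h2
  have hβ1 : β ≤ 1 / 8 := by
    rw [hβ]; exact one_div_le_one_div_of_le (by norm_num) (h2.trans h23)
  have hxα : x2 * α = 1 := by rw [hα]; field_simp
  have hxβ : x3 * β = 1 := by rw [hβ]; field_simp
  have key := normalized_pos (α + β) (α * β) u ((1 - α) * (1 - β)) ((1 - 2 * α) * (1 - 2 * β))
    ((1 - 3 * α) * (1 - 3 * β)) _ _ (by positivity) (by linarith) (by positivity)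
    (by nlinarith) hu1 hu2 (by ring) (by ring) (by ring) rfl rfl
  set a : ℝ := 1 + 2 * u + 2 / 3 * u ^ 2 * ((1 - α) * (1 - β))
    + 4 / 45 * u ^ 3 * ((1 - α) * (1 - β) * ((1 - 2 * α) * (1 - 2 * β)))
    + 2 / 315 * u ^ 4 * ((1 - α) * (1 - β) * ((1 - 2 * α) * (1 - 2 * β))
      * ((1 - 3 * α) * (1 - 3 * β))) with ha
  set b : ℝ := 1 + 2 / 3 * u + 2 / 15 * u ^ 2 * ((1 - α) * (1 - β))
    + 4 / 315 * u ^ 3 * ((1 - α) * (1 - β) * ((1 - 2 * α) * (1 - 2 * β)))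
    + 2 / 2835 * u ^ 4 * ((1 - α) * (1 - β) * ((1 - 2 * α) * (1 - 2 * β))
      * ((1 - 3 * α) * (1 - 3 * β))) with hb
  have y1 : x2 - 1 = x2 * (1 - α) := by linear_combination hxα
  have y2 : x2 - 2 = x2 * (1 - 2 * α) := by linear_combination 2 * hxα
  have y3 : x2 - 3 = x2 * (1 - 3 * α) := by linear_combination 3 * hxα
  have z1 : x3 - 1 = x3 * (1 - β) := by linear_combination hxβ
  have z2 : x3 - 2 = x3 * (1 - 2 * β) := by linear_combination 2 * hxβ
  have z3 : x3 - 3 = x3 * (1 - 3 * β) := by linear_combination 3 * hxβ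
  have hA : A = (Nat.factorial 17 : ℝ) * (x2 * x3) ^ 3 * a := by
    simp only [A, ha]
    simp [Finset.sum_Icc_succ_top, Finset.prod_Icc_succ_top, y1, y2, y3, z1, z2, z3,
      Nat.factorial]
    ring
  have hB : B = (Nat.factorial 17 : ℝ) * (x2 * x3) ^ 3 * b := by
    simp only [B, hb]
    simp [Finset.sum_Icc_succ_top, Finset.prod_Icc_succ_top, y1, y2, y3, z1, z2, z3,
      Nat.factorial]
    ring
  have hN : (0 : ℝ) < Nat.factorial 17 := by positivity
  generalize (Nat.factorial 17 : ℝ) = N at hA hB hN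
  clear_value A B a b
  have t1 : (2 * x2 + 1) * (2 * x3 + 1) = x2 * x3 * (4 + 2 * (α + β) + α * β) := by
    rw [hα, hβ]; field_simp; ring
  have t2 : x2 * x3 - u = x2 * x3 * (1 - u * (α * β)) := by
    rw [hα, hβ]; field_simp
  have t3 : x2 + x3 + 1 = x2 * x3 * (α + β + α * β) := by
    rw [hα, hβ]; field_simp; ring
  have t4 : (2 * x2 + 1) * (2 * x3 + 1) + 1 = x2 * x3 * (4 + 2 * (α + β) + 2 * (α * β)) := by
    rw [hα, hβ]; field_simp; ring
  have t5 : (x2 * x3 * (4 + 2 * (α + β) + 2 * (α * β))) ^ 2 * u - x2 * x3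
      = (x2 * x3) ^ 2 * ((4 + 2 * (α + β) + 2 * (α * β)) ^ 2 * u - α * β) := by
    linear_combination (x2 * x3) * (x3 * β * hxα + hxβ)
  have hpos : 0 < N ^ 2 * (x2 * x3) ^ 8 := by positivity
  have := mul_pos hpos key
  rw [t4, t1, t2, t3, t5, hA, hB]
  refine this.trans_eq ?_
  simp only [Q0, Q1]
  ring
end

section
/- Let m2, m3 be integers with m3 ≥ m2 ≥ 8, and let z be a real number with 1/r² < z ≤ 2.75/(m2·m3). Then [ (m2+m3+1)(rz−1) + √( ((m3−m2)(rz−1))² + (2m2+1)³(2m3+1)³ z ) ] · Σ_{j=0}^{4} 4^j z^j / ((m2−j)!(m3−j)!(2j)!) > (r² z − 1) · Σ_{j=0}^{4} 4^j z^j / ((m2−j)!(m3−j)!(2j+1)!). -/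
/-!
Write `N = 4 m₂ m₃`, `x = N z ∈ (0, 11]`, `σ = 1/m₂ + 1/m₃ ∈ (0, 1/4]`, `π = 1/(m₂ m₃) ∈ [0, σ²/4]`.
Up to the common factor `1/(m₂! m₃!)` the two sums are
`A = ∑ cⱼ xʲ/(2j)!` and `B = ∑ cⱼ xʲ/(2j+1)!` with `cⱼ = ∏_{i<j} (1 - iσ + i²π)`.

With `ρ = B/A` and `E = r² z - 1 > 0`, the claim is that `Eρ` lies below the larger root of the
quadratic `L ↦ (L - (2m₂+1)y)(L - (2m₃+1)y) - (2m₂+1)³(2m₃+1)³z`, where `y = rz - 1`. The value of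
this quadratic at `Eρ` is `E N Φ(x, σ, π, ρ)`, so it suffices that `Φ < 0` (`Phi` below).

Three reductions make `Φ < 0` a statement about two polynomials in `(x, σ)`:
* `Φ` is convex in `ρ` and negative at `ρ = 0`, and `ρ` only increases when `π` is
  replaced by `0` in the coefficients `cⱼ` (`ratio_le`);
* `Φ` is convex in `π`, so only `π = 0` and `π = σ²/4` matter (`Phi_neg_of_endpoints`);
* with `x = 11/(1+t)` and `σ = 1/(4(1+w))`, clearing denominators leaves polynomials in `t, w ≥ 0`
  all of whose coefficients are positive (`endpoint_zero`, `endpoint_sq`).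
-/

namespace Stmt13

/-- The even truncated sum `∑_{j ≤ 4} cⱼ xʲ/(2j)!` with `c₀ = c₁ = 1`. -/
noncomputable def evenSum (x c₂ c₃ c₄ : ℝ) : ℝ :=
  1 + x / 2 + c₂ * x ^ 2 / 24 + c₃ * x ^ 3 / 720 + c₄ * x ^ 4 / 40320

/-- The odd truncated sum `∑_{j ≤ 4} cⱼ xʲ/(2j+1)!` with `c₀ = c₁ = 1`. -/
noncomputable def oddSum (x c₂ c₃ c₄ : ℝ) : ℝ :=
  1 + x / 6 + c₂ * x ^ 2 / 120 + c₃ * x ^ 3 / 5040 + c₄ * x ^ 4 / 362880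

/-- The quadratic in `ρ` whose negativity at `ρ = B/A` implies the claim; here `p` stands for
`π = 1/(m₂ m₃)`. -/
noncomputable def Phi (x σ p ρ : ℝ) : ℝ :=
  (x * (1 + σ / 2 + p / 2) ^ 2 - p / 4) * ρ ^ 2
    - (σ + p) / 2 * (x * (1 + σ / 2 + p / 2) - 1) * ρ
    - (1 + σ / 2 + p / 4) * (1 - x * p / 4)

/-- `oddSum / evenSum` is the mean of `1/(2j+1)` for weights proportional to `cⱼ xʲ/(2j)!`; it
decreases when the weights shift towards larger `j`. -/
lemma ratio_le {x c₂ c₃ c₄ d₂ d₃ d₄ : ℝ} (hx : 0 ≤ x) (h2 : d₂ ≤ c₂) (h3 : d₃ ≤ c₃) (h4 : d₄ ≤ c₄)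
    (h23 : c₂ * d₃ ≤ c₃ * d₂) (h24 : c₂ * d₄ ≤ c₄ * d₂) (h34 : c₃ * d₄ ≤ c₄ * d₃) :
    oddSum x c₂ c₃ c₄ * evenSum x d₂ d₃ d₄ ≤ oddSum x d₂ d₃ d₄ * evenSum x c₂ c₃ c₄ := by
  unfold oddSum evenSum
  have k2 := mul_le_mul_of_nonneg_right h2 (pow_nonneg hx 2)
  have k2' := mul_le_mul_of_nonneg_right h2 (pow_nonneg hx 3)
  have k3 := mul_le_mul_of_nonneg_right h3 (pow_nonneg hx 3)
  have k3' := mul_le_mul_of_nonneg_right h3 (pow_nonneg hx 4)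
  have k4 := mul_le_mul_of_nonneg_right h4 (pow_nonneg hx 4)
  have k4' := mul_le_mul_of_nonneg_right h4 (pow_nonneg hx 5)
  have k23 := mul_le_mul_of_nonneg_right h23 (pow_nonneg hx 5)
  have k24 := mul_le_mul_of_nonneg_right h24 (pow_nonneg hx 6)
  have k34 := mul_le_mul_of_nonneg_right h34 (pow_nonneg hx 7)
  linarith

/-- The homogenized numerator of `evenSum` at `x = 11/T`, `σ = 1/(4W)`, `π = 0`. -/
noncomputable def evenNum (T W : ℝ) : ℝ :=
  64 * W ^ 3 * T ^ 4 + 64 * W ^ 3 * T ^ 3 * 11 / 2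
    + 16 * W ^ 2 * (4 * W - 1) * T ^ 2 * 11 ^ 2 / 24
    + 4 * W * (4 * W - 1) * (4 * W - 2) * T * 11 ^ 3 / 720
    + (4 * W - 1) * (4 * W - 2) * (4 * W - 3) * 11 ^ 4 / 40320

/-- The homogenized numerator of `oddSum` at `x = 11/T`, `σ = 1/(4W)`, `π = 0`. -/
noncomputable def oddNum (T W : ℝ) : ℝ :=
  64 * W ^ 3 * T ^ 4 + 64 * W ^ 3 * T ^ 3 * 11 / 6
    + 16 * W ^ 2 * (4 * W - 1) * T ^ 2 * 11 ^ 2 / 120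
    + 4 * W * (4 * W - 1) * (4 * W - 2) * T * 11 ^ 3 / 5040
    + (4 * W - 1) * (4 * W - 2) * (4 * W - 3) * 11 ^ 4 / 362880

lemma evenNum_pos {t w : ℝ} (ht : 0 ≤ t) (hw : 0 ≤ w) : 0 < evenNum (1 + t) (1 + w) := by
  unfold evenNum
  ring_nf
  positivity

set_option maxHeartbeats 2000000 in
/-- Expanded in `t` and `w`, every coefficient is positive; this polynomial is a positive multiple of
`-Phi` at `p = 0`. -/
lemma numer_zero {t w : ℝ} (ht : 0 ≤ t) (hw : 0 ≤ w) :
    0 < (8 * (1 + w) * (8 * (1 + w) + 1) * (1 + t)) * evenNum (1 + t) (1 + w) ^ 2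
      + (11 * (8 * (1 + w) + 1) - 8 * (1 + w) * (1 + t))
        * (evenNum (1 + t) (1 + w) * oddNum (1 + t) (1 + w))
      - 11 * (8 * (1 + w) + 1) ^ 2 * oddNum (1 + t) (1 + w) ^ 2 := by
  unfold evenNum oddNum
  ring_nf
  positivity

set_option maxHeartbeats 2000000 in
/-- Expanded in `t` and `w`, every coefficient is positive; this polynomial is a positive multiple of
`-Phi` at `p = σ²/4`. -/
lemma numer_sq {t w : ℝ} (ht : 0 ≤ t) (hw : 0 ≤ w) :
    0 < (256 * (1 + w) ^ 2 + 32 * (1 + w) + 1) * (256 * (1 + w) ^ 2 * (1 + t) - 11)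
        * evenNum (1 + t) (1 + w) ^ 2 / 4
      + (16 * (1 + w) + 1) * (11 * (128 * (1 + w) ^ 2 + 16 * (1 + w) + 1)
          - 128 * (1 + w) ^ 2 * (1 + t))
        * (evenNum (1 + t) (1 + w) * oddNum (1 + t) (1 + w))
      - (11 * (128 * (1 + w) ^ 2 + 16 * (1 + w) + 1) ^ 2 - 64 * (1 + w) ^ 2 * (1 + t))
        * oddNum (1 + t) (1 + w) ^ 2 := by
  unfold evenNum oddNum
  ring_nf
  positivity

/-- `evenSum` with the coefficients `cⱼ = ∏_{i<j} (1 - iσ)`, the case `π = 0`. -/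
noncomputable def evenZero (x σ : ℝ) : ℝ :=
  evenSum x (1 - σ) ((1 - σ) * (1 - 2 * σ)) ((1 - σ) * (1 - 2 * σ) * (1 - 3 * σ))

/-- `oddSum` with the coefficients `cⱼ = ∏_{i<j} (1 - iσ)`, the case `π = 0`. -/
noncomputable def oddZero (x σ : ℝ) : ℝ :=
  oddSum x (1 - σ) ((1 - σ) * (1 - 2 * σ)) ((1 - σ) * (1 - 2 * σ) * (1 - 3 * σ))

lemma evenZero_eq {T W : ℝ} (hT : 0 < T) (hW : 0 < W) :
    evenZero (11 / T) (1 / (4 * W)) = evenNum T W / (64 * W ^ 3 * T ^ 4) := by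
  unfold evenZero evenSum evenNum
  field_simp
  ring

lemma oddZero_eq {T W : ℝ} (hT : 0 < T) (hW : 0 < W) :
    oddZero (11 / T) (1 / (4 * W)) = oddNum T W / (64 * W ^ 3 * T ^ 4) := by
  unfold oddZero oddSum oddNum
  field_simp
  ring

lemma ratio_eq {T W : ℝ} (hT : 0 < T) (hW : 0 < W) :
    oddZero (11 / T) (1 / (4 * W)) / evenZero (11 / T) (1 / (4 * W)) = oddNum T W / evenNum T W := by
  rw [evenZero_eq hT hW, oddZero_eq hT hW]
  exact div_div_div_cancel_right₀ (by positivity) _ _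

/-- The substitution `x = 11/(1+t)`, `σ = 1/(4(1+w))` parametrizes `(0, 11] × (0, 1/4]`. -/
lemma exists_param {x σ : ℝ} (hx : 0 < x) (hx' : x ≤ 11) (hσ : 0 < σ) (hσ' : σ ≤ 1 / 4) :
    ∃ t w : ℝ, 0 ≤ t ∧ 0 ≤ w ∧ x = 11 / (1 + t) ∧ σ = 1 / (4 * (1 + w)) := by
  refine ⟨11 / x - 1, 1 / (4 * σ) - 1, ?_, ?_, ?_, ?_⟩
  · rw [sub_nonneg, le_div_iff₀ hx]; linarith
  · rw [sub_nonneg, le_div_iff₀ (by positivity)]; linarith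
  · field_simp; ring
  · field_simp; ring

lemma endpoint_zero {x σ : ℝ} (hx : 0 < x) (hx' : x ≤ 11) (hσ : 0 < σ) (hσ' : σ ≤ 1 / 4) :
    Phi x σ 0 (oddZero x σ / evenZero x σ) < 0 := by
  obtain ⟨t, w, ht, hw, rfl, rfl⟩ := exists_param hx hx' hσ hσ'
  have key := numer_zero ht hw
  have hA := evenNum_pos ht hw
  have hT : 0 < 1 + t := by linarith
  have hW : 0 < 1 + w := by linarith
  rw [ratio_eq hT hW]
  generalize evenNum (1 + t) (1 + w) = A at *
  generalize oddNum (1 + t) (1 + w) = B at *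
  generalize 1 + t = T at *
  generalize 1 + w = W at *
  have : Phi (11 / T) (1 / (4 * W)) 0 (B / A) =
      -(8 * W * (8 * W + 1) * T * A ^ 2 + (11 * (8 * W + 1) - 8 * W * T) * (A * B)
        - 11 * (8 * W + 1) ^ 2 * B ^ 2) / (64 * W ^ 2 * T * A ^ 2) := by
    unfold Phi
    field_simp
    ring
  rw [this]
  exact div_neg_of_neg_of_pos (by linarith) (by positivity)

lemma endpoint_sq {x σ : ℝ} (hx : 0 < x) (hx' : x ≤ 11) (hσ : 0 < σ) (hσ' : σ ≤ 1 / 4) :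
    Phi x σ (σ ^ 2 / 4) (oddZero x σ / evenZero x σ) < 0 := by
  obtain ⟨t, w, ht, hw, rfl, rfl⟩ := exists_param hx hx' hσ hσ'
  have key := numer_sq ht hw
  have hA := evenNum_pos ht hw
  have hT : 0 < 1 + t := by linarith
  have hW : 0 < 1 + w := by linarith
  rw [ratio_eq hT hW]
  generalize evenNum (1 + t) (1 + w) = A at *
  generalize oddNum (1 + t) (1 + w) = B at *
  generalize 1 + t = T at *
  generalize 1 + w = W at *
  have : Phi (11 / T) (1 / (4 * W)) ((1 / (4 * W)) ^ 2 / 4) (B / A) =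
      -((256 * W ^ 2 + 32 * W + 1) * (256 * W ^ 2 * T - 11) * A ^ 2 / 4
        + (16 * W + 1) * (11 * (128 * W ^ 2 + 16 * W + 1) - 128 * W ^ 2 * T) * (A * B)
        - (11 * (128 * W ^ 2 + 16 * W + 1) ^ 2 - 64 * W ^ 2 * T) * B ^ 2)
        / (16384 * W ^ 4 * T * A ^ 2) := by
    unfold Phi
    field_simp
    ring
  rw [this]
  exact div_neg_of_neg_of_pos (by linarith) (by positivity)

/-- Convexity in `p`: the coefficient of `p²` in `Phi` is `x/4 * (ρ - 1/2)²`. -/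
lemma Phi_neg_of_endpoints {x σ p q ρ : ℝ} (hx : 0 ≤ x) (hq : 0 < q) (hp : 0 ≤ p) (hpq : p ≤ q)
    (h0 : Phi x σ 0 ρ < 0) (h1 : Phi x σ q ρ < 0) : Phi x σ p ρ < 0 := by
  have id : q * Phi x σ p ρ = p * Phi x σ q ρ + (q - p) * Phi x σ 0 ρ
      - x / 4 * (ρ - 1 / 2) ^ 2 * (p * q * (q - p)) := by
    unfold Phi
    ring
  have hc : 0 ≤ x / 4 * (ρ - 1 / 2) ^ 2 * (p * q * (q - p)) := by
    have := sub_nonneg.2 hpq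
    positivity
  have hs : p * Phi x σ q ρ + (q - p) * Phi x σ 0 ρ < 0 := by
    rcases hp.eq_or_lt with rfl | hp'
    · nlinarith
    · nlinarith [mul_neg_of_pos_of_neg hp' h1, mul_nonneg (sub_nonneg.2 hpq) (neg_nonneg.2 h0.le)]
  have : q * Phi x σ p ρ < 0 := by linarith
  exact (pos_iff_neg_of_mul_neg this).1 hq

/-- A convex quadratic in `ρ` that is negative at `0` and at `ρ₀` is negative in between. -/
lemma Phi_neg_of_le {x σ p ρ ρ₀ : ℝ} (hE : 0 ≤ x * (1 + σ / 2 + p / 2) ^ 2 - p / 4)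
    (hC : 0 < (1 + σ / 2 + p / 4) * (1 - x * p / 4)) (hρ : 0 ≤ ρ) (hle : ρ ≤ ρ₀) (hpos : 0 < ρ₀)
    (h : Phi x σ p ρ₀ < 0) : Phi x σ p ρ < 0 := by
  have id : ρ₀ * Phi x σ p ρ = ρ * Phi x σ p ρ₀
      - (ρ₀ - ρ) * ((1 + σ / 2 + p / 4) * (1 - x * p / 4))
      - (x * (1 + σ / 2 + p / 2) ^ 2 - p / 4) * (ρ * ρ₀ * (ρ₀ - ρ)) := by
    unfold Phi
    ring
  have hd := sub_nonneg.2 hle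
  have h1 : 0 ≤ (x * (1 + σ / 2 + p / 2) ^ 2 - p / 4) * (ρ * ρ₀ * (ρ₀ - ρ)) := by positivity
  have hs : ρ * Phi x σ p ρ₀ - (ρ₀ - ρ) * ((1 + σ / 2 + p / 4) * (1 - x * p / 4)) < 0 := by
    rcases hρ.eq_or_lt with rfl | hρ'
    · nlinarith
    · nlinarith [mul_neg_of_pos_of_neg hρ' h, mul_nonneg hd hC.le]
  have : ρ₀ * Phi x σ p ρ < 0 := by linarith
  exact (pos_iff_neg_of_mul_neg this).1 hpos

/-- `Phi < 0` at the true ratio `ρ`, with `cⱼ = ∏_{i<j} (1 - iσ + i²p)`. -/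
lemma Phi_neg {x σ p : ℝ} (hx : 0 < x) (hx' : x ≤ 11) (hσ : 0 < σ) (hσ' : σ ≤ 1 / 4) (hp : 0 < p)
    (hp' : p ≤ σ ^ 2 / 4) (hE : 0 ≤ x * (1 + σ / 2 + p / 2) ^ 2 - p / 4) {c₂ c₃ c₄ : ℝ}
    (h2 : c₂ = 1 - σ + p) (h3 : c₃ = c₂ * (1 - 2 * σ + 4 * p))
    (h4 : c₄ = c₃ * (1 - 3 * σ + 9 * p)) :
    Phi x σ p (oddSum x c₂ c₃ c₄ / evenSum x c₂ c₃ c₄) < 0 := by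
  have e1 : 0 < 1 - σ := by linarith
  have e2 : 0 < 1 - 2 * σ := by linarith
  have e3 : 0 < 1 - 3 * σ := by linarith
  have g2 : 0 < c₂ := by rw [h2]; linarith
  have g3 : 0 < c₃ := by rw [h3]; exact mul_pos g2 (by linarith)
  have g4 : 0 < c₄ := by rw [h4]; exact mul_pos g3 (by linarith)
  have l2 : 1 - σ ≤ c₂ := by linarith
  have l3 : (1 - σ) * (1 - 2 * σ) ≤ c₃ := by
    rw [h3]; exact mul_le_mul l2 (by linarith) e2.le g2.le
  have l4 : (1 - σ) * (1 - 2 * σ) * (1 - 3 * σ) ≤ c₄ := by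
    rw [h4]; exact mul_le_mul l3 (by linarith) e3.le g3.le
  have hA : 0 < evenSum x c₂ c₃ c₄ := by unfold evenSum; positivity
  have hB : 0 < oddSum x c₂ c₃ c₄ := by unfold oddSum; positivity
  have hA0 : 0 < evenZero x σ := by unfold evenZero evenSum; positivity
  have hB0 : 0 < oddZero x σ := by unfold oddZero oddSum; positivity
  have hle : oddSum x c₂ c₃ c₄ / evenSum x c₂ c₃ c₄ ≤ oddZero x σ / evenZero x σ := by
    rw [div_le_div_iff₀ hA hA0]
    apply ratio_le hx.le l2 l3 l4
    · have : 0 ≤ c₂ * (1 - σ) * (4 * p) := by positivity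
      rw [h3]; linarith
    · have : (1 - 2 * σ) * (1 - 3 * σ) ≤ (1 - 2 * σ + 4 * p) * (1 - 3 * σ + 9 * p) :=
        mul_le_mul (by linarith) (by linarith) e3.le (by linarith)
      have := mul_le_mul_of_nonneg_left this (mul_pos g2 e1).le
      rw [h4, h3]; linarith
    · have : 0 ≤ c₃ * ((1 - σ) * (1 - 2 * σ)) * (9 * p) := by positivity
      rw [h4]; linarith
  have hq : p ≤ 1 / 64 := by nlinarith
  refine Phi_neg_of_le hE ?_ (by positivity) hle (by positivity) ?_
  · exact mul_pos (by positivity) (by nlinarith)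
  · exact Phi_neg_of_endpoints hx.le (by positivity) hp.le hp' (endpoint_zero hx hx' hσ hσ')
      (endpoint_sq hx hx' hσ hσ')

lemma factorial_steps {m : ℕ} (hm : 4 ≤ m) :
    (m.factorial : ℝ) = m * ((m - 1).factorial : ℝ) ∧
    ((m - 1).factorial : ℝ) = (m - 1) * ((m - 2).factorial : ℝ) ∧
    ((m - 2).factorial : ℝ) = (m - 2) * ((m - 3).factorial : ℝ) ∧
    ((m - 3).factorial : ℝ) = (m - 3) * ((m - 4).factorial : ℝ) := by
  obtain ⟨n, rfl⟩ := Nat.exists_eq_add_of_le' hm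
  simp only [Nat.add_sub_cancel, show n + 4 - 1 = n + 3 by omega, show n + 4 - 2 = n + 2 by omega,
    show n + 4 - 3 = n + 1 by omega, Nat.factorial_succ]
  push_cast
  refine ⟨?_, ?_, ?_, ?_⟩ <;> ring

/-- Rewrites both sums of the statement in terms of `x` and `cⱼ`; `f j` stands for `(2j)!` or
`(2j+1)!`. -/
lemma sum_eq {m n : ℕ} (hm : 8 ≤ m) (hn : 8 ≤ n) (z : ℝ) (f : ℕ → ℝ) (hf : ∀ j, f j ≠ 0)
    {x c₂ c₃ c₄ : ℝ} (hx : x = 4 * m * n * z)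
    (h2 : c₂ = (1 - 1 / (m : ℝ)) * (1 - 1 / n))
    (h3 : c₃ = c₂ * ((1 - 2 / (m : ℝ)) * (1 - 2 / n)))
    (h4 : c₄ = c₃ * ((1 - 3 / (m : ℝ)) * (1 - 3 / n))) :
    (∑ j ∈ Finset.range 5, (4 : ℝ) ^ j * z ^ j /
      (((m - j).factorial : ℝ) * ((n - j).factorial : ℝ) * f j)) =
    (1 / f 0 + x / f 1 + c₂ * x ^ 2 / f 2 + c₃ * x ^ 3 / f 3 + c₄ * x ^ 4 / f 4)
      / ((m.factorial : ℝ) * n.factorial) := by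
  obtain ⟨a1, a2, a3, a4⟩ := factorial_steps (m := m) (by omega)
  obtain ⟨b1, b2, b3, b4⟩ := factorial_steps (m := n) (by omega)
  have hm' : (8 : ℝ) ≤ m := by exact_mod_cast hm
  have hn' : (8 : ℝ) ≤ n := by exact_mod_cast hn
  have p4 : ((m - 4).factorial : ℝ) ≠ 0 := by positivity
  have q4 : ((n - 4).factorial : ℝ) ≠ 0 := by positivity
  have m0 : (m : ℝ) ≠ 0 := by linarith
  have m1 : (m : ℝ) - 1 ≠ 0 := by linarith
  have m2 : (m : ℝ) - 2 ≠ 0 := by linarith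
  have m3 : (m : ℝ) - 3 ≠ 0 := by linarith
  have n0 : (n : ℝ) ≠ 0 := by linarith
  have n1 : (n : ℝ) - 1 ≠ 0 := by linarith
  have n2 : (n : ℝ) - 2 ≠ 0 := by linarith
  have n3 : (n : ℝ) - 3 ≠ 0 := by linarith
  have f0 := hf 0
  have f1 := hf 1
  have f2 := hf 2
  have f3 := hf 3
  have f4 := hf 4
  simp only [Finset.sum_range_succ, Finset.sum_range_zero, Nat.sub_zero, zero_add]
  rw [h4, h3, h2, hx, a1, a2, a3, a4, b1, b2, b3, b4]
  simp only [add_div]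
  congr 1
  · congr 1
    · congr 1
      · congr 1
        · field_simp
        · field_simp
      · field_simp
        try ring
    · field_simp
      try ring
  · field_simp
    try ring

end Stmt13

open Stmt13 in
/-- The first inequality of (4.4): for integers `m₃ ≥ m₂ ≥ 8` and
`1/r² < z ≤ 2.75/(m₂m₃)`, the truncated (to `j ≤ 4`) hypergeometric sums satisfy
the stated inequality. -/
theorem stmt_13 (m2 m3 : ℕ) (h8 : 8 ≤ m2) (h23 : m2 ≤ m3) (z : ℝ) :
    let r : ℝ := (2 * m2 + 1) * (2 * m3 + 1) + 1
    1 / r ^ 2 < z → z ≤ 2.75 / ((m2 : ℝ) * m3) →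
      (((m2 : ℝ) + m3 + 1) * (r * z - 1) +
        Real.sqrt ((((m3 : ℝ) - m2) * (r * z - 1)) ^ 2 +
          (2 * (m2 : ℝ) + 1) ^ 3 * (2 * (m3 : ℝ) + 1) ^ 3 * z)) *
        (∑ j ∈ Finset.range 5, (4 : ℝ) ^ j * z ^ j /
          (((m2 - j).factorial : ℝ) * ((m3 - j).factorial : ℝ) * ((2 * j).factorial : ℝ))) >
      (r ^ 2 * z - 1) *
        (∑ j ∈ Finset.range 5, (4 : ℝ) ^ j * z ^ j /
          (((m2 - j).factorial : ℝ) * ((m3 - j).factorial : ℝ) *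
            ((2 * j + 1).factorial : ℝ))) := by
  intro r hz1 hz2
  have hm : (8 : ℝ) ≤ m2 := by exact_mod_cast h8
  have hn : (8 : ℝ) ≤ m3 := by exact_mod_cast h8.trans h23
  have hm0 : (0 : ℝ) < m2 := by linarith
  have hn0 : (0 : ℝ) < m3 := by linarith
  have hr : 0 < r := by positivity
  have hz : 0 < z := lt_trans (by positivity) hz1
  have hE : 0 < r ^ 2 * z - 1 := by
    rw [div_lt_iff₀ (by positivity)] at hz1
    linarith
  obtain ⟨x, hx⟩ : ∃ x : ℝ, x = 4 * m2 * m3 * z := ⟨_, rfl⟩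
  obtain ⟨σ, hσ⟩ : ∃ σ : ℝ, σ = 1 / m2 + 1 / m3 := ⟨_, rfl⟩
  obtain ⟨p, hp⟩ : ∃ p : ℝ, p = 1 / m2 * (1 / m3) := ⟨_, rfl⟩
  obtain ⟨c₂, h2⟩ : ∃ c : ℝ, c = (1 - 1 / (m2 : ℝ)) * (1 - 1 / m3) := ⟨_, rfl⟩
  obtain ⟨c₃, h3⟩ : ∃ c : ℝ, c = c₂ * ((1 - 2 / (m2 : ℝ)) * (1 - 2 / m3)) := ⟨_, rfl⟩
  obtain ⟨c₄, h4⟩ : ∃ c : ℝ, c = c₃ * ((1 - 3 / (m2 : ℝ)) * (1 - 3 / m3)) := ⟨_, rfl⟩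
  have hx0 : 0 < x := by rw [hx]; positivity
  have hx11 : x ≤ 11 := by
    rw [le_div_iff₀ (by positivity)] at hz2
    rw [hx]; linarith
  have i2 : 1 / (m2 : ℝ) ≤ 1 / 8 := one_div_le_one_div_of_le (by norm_num) hm
  have i3 : 1 / (m3 : ℝ) ≤ 1 / 8 := one_div_le_one_div_of_le (by norm_num) hn
  have hσ0 : 0 < σ := by rw [hσ]; positivity
  have hp0 : 0 < p := by rw [hp]; positivity
  have hpσ : p ≤ σ ^ 2 / 4 := by
    rw [hp, hσ]
    nlinarith [sq_nonneg (1 / (m2 : ℝ) - 1 / m3)]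
  have hEx : r ^ 2 * z - 1 = 4 * m2 * m3 * (x * (1 + σ / 2 + p / 2) ^ 2 - p / 4) := by
    rw [hx, hσ, hp]; simp only [r]
    field_simp
    ring
  have hE' : 0 ≤ x * (1 + σ / 2 + p / 2) ^ 2 - p / 4 := by
    rw [hEx] at hE
    exact (pos_of_mul_pos_right hE (by positivity)).le
  have hPhi := Phi_neg hx0 hx11 hσ0 (by rw [hσ]; linarith) hp0 hpσ hE' (c₂ := c₂) (c₃ := c₃)
    (c₄ := c₄) (by rw [h2, hσ, hp]; ring) (by rw [h3, hσ, hp]; ring) (by rw [h4, hσ, hp]; ring)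
  have sE := sum_eq h8 (h8.trans h23) z (fun j => ((2 * j).factorial : ℝ))
    (fun j => by positivity) hx h2 h3 h4
  have sO := sum_eq h8 (h8.trans h23) z (fun j => ((2 * j + 1).factorial : ℝ))
    (fun j => by positivity) hx h2 h3 h4
  have tE : (∑ j ∈ Finset.range 5, (4 : ℝ) ^ j * z ^ j /
      (((m2 - j).factorial : ℝ) * ((m3 - j).factorial : ℝ) * ((2 * j).factorial : ℝ))) =
      evenSum x c₂ c₃ c₄ / ((m2.factorial : ℝ) * m3.factorial) := by
    rw [sE]; norm_num [evenSum, Nat.factorial]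
  have tO : (∑ j ∈ Finset.range 5, (4 : ℝ) ^ j * z ^ j /
      (((m2 - j).factorial : ℝ) * ((m3 - j).factorial : ℝ) * ((2 * j + 1).factorial : ℝ))) =
      oddSum x c₂ c₃ c₄ / ((m2.factorial : ℝ) * m3.factorial) := by
    rw [sO]; norm_num [oddSum, Nat.factorial]
  have d2 : 2 / (m2 : ℝ) ≤ 2 / 8 := by gcongr
  have d3 : 2 / (m3 : ℝ) ≤ 2 / 8 := by gcongr
  have e2 : 3 / (m2 : ℝ) ≤ 3 / 8 := by gcongr
  have e3 : 3 / (m3 : ℝ) ≤ 3 / 8 := by gcongr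
  have g2 : 0 < c₂ := by rw [h2]; exact mul_pos (by linarith) (by linarith)
  have g3 : 0 < c₃ := by
    rw [h3]; exact mul_pos g2 (mul_pos (by linarith) (by linarith))
  have g4 : 0 < c₄ := by
    rw [h4]; exact mul_pos g3 (mul_pos (by linarith) (by linarith))
  have hA : 0 < evenSum x c₂ c₃ c₄ := by unfold evenSum; positivity
  rw [tE, tO, gt_iff_lt, ← mul_div_assoc, ← mul_div_assoc]
  apply div_lt_div_of_pos_right _ (by positivity)
  rw [← div_lt_iff₀ hA, mul_div_assoc]
  generalize oddSum x c₂ c₃ c₄ / evenSum x c₂ c₃ c₄ = ρ at hPhi ⊢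
  -- The quadratic with larger root `(m2 + m3 + 1)(rz - 1) + √(…)` is negative at `(r² z - 1) ρ`.
  have hquad : (((m3 : ℝ) - m2) * (r * z - 1)) ^ 2 +
      (2 * (m2 : ℝ) + 1) ^ 3 * (2 * (m3 : ℝ) + 1) ^ 3 * z
      - ((r ^ 2 * z - 1) * ρ - ((m2 : ℝ) + m3 + 1) * (r * z - 1)) ^ 2
      = -((r ^ 2 * z - 1) * (4 * m2 * m3 * Phi x σ p ρ)) := by
    unfold Phi
    rw [hx, hσ, hp]; simp only [r]
    field_simp
    ring
  have hneg : (r ^ 2 * z - 1) * (4 * m2 * m3 * Phi x σ p ρ) < 0 :=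
    mul_neg_of_pos_of_neg hE (mul_neg_of_pos_of_neg (by positivity) hPhi)
  rw [← sub_lt_iff_lt_add']
  apply Real.lt_sqrt_of_sq_lt
  linarith
end

section
/- Let m2, m3 be integers with m3 ≥ m2 ≥ 8, and let z be a real number with 1/r² < z ≤ 2.75/(m2·m3). Then H(z) · Σ_{j=5}^{m2} 4^j z^j / ((m2−j)!(m3−j)!(2j)!) > Σ_{j=5}^{m2} 4^j z^j / ((m2−j)!(m3−j)!(2j+1)!). -/
/-!
The `j`-th term on the right is the `j`-th term of the left sum divided by `2j + 1`, and `2j + 1 ≥ 11`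
for `j ≥ 5`. The theorem therefore follows termwise from `H(z) > 1/11`.

To bound `H`, write `s = m₂ + m₃ + 1`, `P = s (r z - 1)` and `D = r² z - 1 > 0`, so that
`H = (P + √Q) / D`. The identities `s² - (m₃ - m₂)² = (2m₂ + 1)(2m₃ + 1) = r - 1` give
`Q = P² + (r - 1) D (1 - z)`. Hence `√Q > D/11 - P` follows from `Q > (D/11 - P)²`, which after
division by `D` becomes an inequality that is affine in `z`:
`121 (r - 1)(1 - z) > D - 22 s (r z - 1)`. It holds with much room, since `r z ≤ 12.5`, `z < 0.05`
and `s` is small compared with `r`.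
-/

/-- The lower bound `H(z) > 1/11`, with `a = m₂` and `b = m₃` allowed to be real. -/
lemma one_div_eleven_lt_H (a b r z : ℝ) (ha : 8 ≤ a) (hab : a ≤ b)
    (hr : r = (2 * a + 1) * (2 * b + 1) + 1)
    (hz1 : 1 / r ^ 2 < z) (hz2 : z ≤ 2.75 / (a * b)) :
    1 / 11 < ((a + b + 1) * (r * z - 1) +
        Real.sqrt (((b - a) * (r * z - 1)) ^ 2 +
          (2 * a + 1) ^ 3 * (2 * b + 1) ^ 3 * z)) / (r ^ 2 * z - 1) := by
  have hb : 8 ≤ b := ha.trans hab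
  have hab' : 8 * a + 8 * b - 64 ≤ a * b := by nlinarith
  have hab64 : 64 ≤ a * b := by nlinarith
  have hrpos : 0 < r := by rw [hr]; positivity
  have hz : 0 < z := lt_trans (by positivity) hz1
  have hD : 0 < r ^ 2 * z - 1 := by
    rw [div_lt_iff₀ (by positivity)] at hz1
    linarith
  have hzab : z * (a * b) ≤ 2.75 := by
    rwa [le_div_iff₀ (by positivity)] at hz2
  have hz05 : z ≤ 0.05 := by nlinarith
  have hrz : r * z ≤ 12.5 := by
    have h1 : r ≤ 4.54 * (a * b) := by
      rw [hr]; nlinarith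
    nlinarith
  have hQ : ((b - a) * (r * z - 1)) ^ 2 + (2 * a + 1) ^ 3 * (2 * b + 1) ^ 3 * z
      = ((a + b + 1) * (r * z - 1)) ^ 2 + (r - 1) * (r ^ 2 * z - 1) * (1 - z) := by
    rw [hr]; ring
  have hlin : r ^ 2 * z - 1 - 22 * ((a + b + 1) * (r * z - 1)) < 121 * ((r - 1) * (1 - z)) := by
    have hs : 22 * (a + b + 1) ≤ 2 * r := by rw [hr]; nlinarith
    have h1 : r ^ 2 * z ≤ 12.5 * r := by nlinarith
    have h2 : 0 ≤ (a + b + 1) * (r * z) := by positivity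
    have hr256 : 256 ≤ r := by rw [hr]; nlinarith
    have h3 : (r - 1) * 0.95 ≤ (r - 1) * (1 - z) :=
      mul_le_mul_of_nonneg_left (by linarith) (by linarith)
    linarith
  rw [lt_div_iff₀ hD, hQ]
  have key : (1 / 11 * (r ^ 2 * z - 1) - (a + b + 1) * (r * z - 1)) <
      Real.sqrt (((a + b + 1) * (r * z - 1)) ^ 2 + (r - 1) * (r ^ 2 * z - 1) * (1 - z)) := by
    apply Real.lt_sqrt_of_sq_lt
    have := mul_lt_mul_of_pos_left hlin hD
    linarith
  linarith

/-- The second inequality of (4.4): for integers `m₃ ≥ m₂ ≥ 8` and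
`1/r² < z ≤ 2.75/(m₂m₃)`, the tails (`j ≥ 5`) of the hypergeometric sums satisfy
`H(z) Σ_{j=5}^{m₂} 4ʲzʲ/((m₂−j)!(m₃−j)!(2j)!) > Σ_{j=5}^{m₂} 4ʲzʲ/((m₂−j)!(m₃−j)!(2j+1)!)`. -/
theorem stmt_14 (m2 m3 : ℕ) (h8 : 8 ≤ m2) (h23 : m2 ≤ m3) (z : ℝ) :
    let r : ℝ := (2 * m2 + 1) * (2 * m3 + 1) + 1
    let H : ℝ → ℝ := fun w =>
      (((m2 : ℝ) + m3 + 1) * (r * w - 1) +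
        Real.sqrt ((((m3 : ℝ) - m2) * (r * w - 1)) ^ 2 +
          (2 * (m2 : ℝ) + 1) ^ 3 * (2 * (m3 : ℝ) + 1) ^ 3 * w)) / (r ^ 2 * w - 1)
    1 / r ^ 2 < z → z ≤ 2.75 / ((m2 : ℝ) * m3) →
      H z * (∑ j ∈ Finset.Icc 5 m2, (4 : ℝ) ^ j * z ^ j /
          (((m2 - j).factorial : ℝ) * ((m3 - j).factorial : ℝ) * ((2 * j).factorial : ℝ))) >
        ∑ j ∈ Finset.Icc 5 m2, (4 : ℝ) ^ j * z ^ j /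
          (((m2 - j).factorial : ℝ) * ((m3 - j).factorial : ℝ) *
            ((2 * j + 1).factorial : ℝ)) := by
  intro r H hz1 hz2
  have ha : (8 : ℝ) ≤ m2 := by exact_mod_cast h8
  have hab : (m2 : ℝ) ≤ m3 := by exact_mod_cast h23
  have hH : 1 / 11 < H z := one_div_eleven_lt_H m2 m3 r z ha hab rfl hz1 hz2
  have hz : 0 < z := lt_of_le_of_lt (by positivity) hz1
  rw [gt_iff_lt, Finset.mul_sum]
  refine Finset.sum_lt_sum_of_nonempty ⟨5, Finset.mem_Icc.2 ⟨le_rfl, by omega⟩⟩ ?_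
  intro j hj
  have hj5 : (5 : ℝ) ≤ j := by exact_mod_cast (Finset.mem_Icc.1 hj).1
  have hfac : ((2 * j + 1).factorial : ℝ) = (2 * j + 1) * ((2 * j).factorial : ℝ) := by
    rw [Nat.factorial_succ]; push_cast; ring
  set t : ℝ := (4 : ℝ) ^ j * z ^ j /
    (((m2 - j).factorial : ℝ) * ((m3 - j).factorial : ℝ) * ((2 * j).factorial : ℝ)) with ht
  have htpos : 0 < t := by positivity
  have hterm : (4 : ℝ) ^ j * z ^ j / (((m2 - j).factorial : ℝ) * ((m3 - j).factorial : ℝ) *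
      ((2 * j + 1).factorial : ℝ)) = 1 / (2 * j + 1) * t := by
    rw [hfac, ht]; field_simp
  rw [hterm]
  refine mul_lt_mul_of_pos_right (lt_of_le_of_lt ?_ hH) htpos
  exact one_div_le_one_div_of_le (by norm_num) (by linarith)
end
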